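/- Let E₁, …, E_m be a chain of word equations on three unknowns, i.e., a sequence of nontrivial equations with Sol(E₁) ⊋ Sol(E₁, E₂) ⊋ ⋯ ⊋ Sol(E₁, …, E_m). Then there exist two unknowns x, y ∈ Ξ such that m ≤ (|E₁|_x + |E₁|_y)² + 5. -/

import Mathlib

open Polynomial

/-- The characteristic polynomial `P(w)` of a word. -/
noncomputable def wordPoly (w : List ℕ) : Polynomial ℤ :=
  ∑ i ∈ Finset.range w.length, Polynomial.C (w.getD i 0 : ℤ) * Polynomial.X ^ i

/-- Application of a morphism (given by the images of the unknowns) to a word. -/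
def mApply {n : ℕ} {β : Type*} (h : Fin n → List β) (w : List (Fin n)) : List β :=
  (w.map h).flatten

/-- The morphism maps every unknown to a word over the alphabet `A`. -/
def IntoAlph {n : ℕ} (A : Finset ℕ) (h : Fin n → List ℕ) : Prop :=
  ∀ i, ∀ a ∈ h i, a ∈ A

/-- `w` is a product of words from `A`. -/
def InStar (A : Finset (List ℕ)) (w : List ℕ) : Prop :=
  ∃ l : List (List ℕ), (∀ u ∈ l, u ∈ A) ∧ l.flatten = w

/-- The combinatorial rank of a morphism: the smallest `r` such that there is a set of
`r` words whose products contain all images of the unknowns. -/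
noncomputable def mRank {n : ℕ} (h : Fin n → List ℕ) : ℕ :=
  sInf {r | ∃ A : Finset (List ℕ), A.card = r ∧ ∀ i, InStar A (h i)}

/-- The length type of a morphism, as a rational vector. -/
def lenQ {n : ℕ} (h : Fin n → List ℕ) : Fin n → ℚ :=
  fun i => ((h i).length : ℚ)

/-- `|w|_L`: the length of the image of `w` under any morphism of length type `L`. -/
def lenL {n : ℕ} (L : Fin n → ℕ) (w : List (Fin n)) : ℕ :=
  (w.map L).sum

/-- The polynomial `Q_{E,x,L}` for the word equation `u = v`, the unknown `x` and the
length type `L`. -/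
noncomputable def eqPoly {n : ℕ} (u v : List (Fin n)) (x : Fin n) (L : Fin n → ℕ) :
    Polynomial ℤ :=
  (∑ i ∈ Finset.range u.length,
      if u.getD i x = x then (Polynomial.X : Polynomial ℤ) ^ lenL L (u.take i) else 0)
    - ∑ i ∈ Finset.range v.length,
      if v.getD i x = x then (Polynomial.X : Polynomial ℤ) ^ lenL L (v.take i) else 0

/-- Embedding of `ℤ[X]` into the field `ℚ(X)` of rational functions. -/
noncomputable def toRF (p : Polynomial ℤ) : RatFunc ℚ :=
  algebraMap (Polynomial ℚ) (RatFunc ℚ) (p.map (Int.castRingHom ℚ))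


namespace WE

abbrev GG := FreeGroup Bool
def ga : GG := FreeGroup.of false
def gb : GG := FreeGroup.of true

/-- the product of all `b a^k`, `k` in the list -/
def pr (l : List ℤ) : GG := (l.map (fun k => gb * ga ^ k)).prod

@[simp] lemma pr_nil : pr [] = 1 := rfl
@[simp] lemma pr_cons (k : ℤ) (l : List ℤ) : pr (k :: l) = gb * ga ^ k * pr l := by simp [pr]
lemma pr_append (l l' : List ℤ) : pr (l ++ l') = pr l * pr l' := by simp [pr]

def permA (c : ℤ) : Equiv.Perm (ℤ × ℤ) where
  toFun x := (x.1, x.2 + if x.1 = 0 then c else 0)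
  invFun x := (x.1, x.2 - if x.1 = 0 then c else 0)
  left_inv x := by simp
  right_inv x := by simp

def permB : Equiv.Perm (ℤ × ℤ) where
  toFun x := (x.1 + 1, x.2)
  invFun x := (x.1 - 1, x.2)
  left_inv x := by simp
  right_inv x := by simp

def permAHom : Multiplicative ℤ →* Equiv.Perm (ℤ × ℤ) where
  toFun c := permA c.toAdd
  map_one' := by ext x <;> simp [permA]
  map_mul' c d := by
    ext x
    · simp [permA]
    · simp only [permA, Equiv.Perm.mul_apply, Equiv.coe_fn_mk, toAdd_mul]; split_ifs <;> ring

lemma permA_zpow (k : ℤ) : permA 1 ^ k = permA k := by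
  have h := map_zpow permAHom (Multiplicative.ofAdd 1) k
  have h2 : permAHom (Multiplicative.ofAdd 1 ^ k) = permA k := by
    simp [permAHom, ← ofAdd_zsmul]
  rw [← h2, h]; rfl

def act : GG →* Equiv.Perm (ℤ × ℤ) := FreeGroup.lift (fun x => if x then permB else permA 1)

lemma act_a (k : ℤ) : act (ga ^ k) = permA k := by
  rw [map_zpow, ← permA_zpow]; simp [act, ga]
lemma act_b : act gb = permB := by simp [act, gb]

lemma act_pr (l : List ℤ) : ∀ p n : ℤ, p + l.length ≤ 0 → act (pr l) (p, n) = (p + l.length, n) := by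
  induction l with
  | nil => intro p n _; simp
  | cons k l ih =>
    intro p n h
    simp only [List.length_cons, Nat.cast_add, Nat.cast_one] at h
    have h0 : p + l.length ≠ 0 := by omega
    simp only [pr_cons, map_mul, Equiv.Perm.mul_apply, act_a, act_b, ih p n (by omega)]
    simp [permA, permB, h0, add_assoc]

lemma pr_inj : ∀ (l l' : List ℤ) (c c' : ℤ), ga ^ c * pr l = ga ^ c' * pr l' → c = c' ∧ l = l' := by
  have key : ∀ (l l' : List ℤ) (c c' : ℤ), ga ^ c * pr l = ga ^ c' * pr l' →
      l.length = l'.length ∧ c = c' := by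
    intro l l' c c' h
    have h1 : l.length = l'.length := by
      have := congrArg (fun g => (act g (-(l.length : ℤ) - l'.length - 1, 0)).1) h
      simp only [map_mul, Equiv.Perm.mul_apply, act_a] at this
      rw [act_pr _ _ _ (by omega), act_pr _ _ _ (by omega)] at this
      simp [permA] at this
      omega
    refine ⟨h1, ?_⟩
    have := congrArg (fun g => (act g (-(l.length : ℤ), 0)).2) h
    simp only [map_mul, Equiv.Perm.mul_apply, act_a] at this
    rw [act_pr _ _ _ (by omega), act_pr _ _ _ (by omega)] at this
    simpa [permA, h1] using this
  intro l
  induction l with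
  | nil =>
    intro l' c c' h
    obtain ⟨h1, h2⟩ := key _ _ _ _ h
    exact ⟨h2, (List.length_eq_zero_iff.1 h1.symm).symm⟩
  | cons k l ih =>
    intro l' c c' h
    obtain ⟨h1, h2⟩ := key _ _ _ _ h
    subst h2
    cases l' with
    | nil => simp at h1
    | cons k' l' =>
      have h' := mul_left_cancel h
      simp only [pr_cons, mul_assoc] at h'
      obtain ⟨rfl, rfl⟩ := ih _ _ _ (mul_left_cancel h')
      exact ⟨rfl, rfl⟩

/-- `b a^{e₁} b a^{e₂} ... b` -/
def be (e : List ℤ) : GG := pr e * gb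

@[simp] lemma be_nil : be [] = gb := by simp [be]
lemma be_cons (k : ℤ) (e : List ℤ) : be (k :: e) = gb * ga ^ k * be e := by simp [be, mul_assoc]
lemma be_mul (e : List ℤ) (d : ℤ) : be e * ga ^ d = pr (e ++ [d]) := by
  simp [be, pr_append, mul_assoc]
lemma be_append (e f : List ℤ) (d : ℤ) : be (e ++ d :: f) = be e * ga ^ d * be f := by
  simp [be, pr_append, mul_assoc]

/-- the anti-automorphism fixing the generators -/
def inveHom : GG →* GG := FreeGroup.lift (fun x => if x then gb⁻¹ else ga⁻¹)
def rv (g : GG) : GG := (inveHom g)⁻¹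

lemma rv_mul (g h : GG) : rv (g * h) = rv h * rv g := by simp [rv]
@[simp] lemma rv_one : rv 1 = 1 := by simp [rv]
@[simp] lemma rv_b : rv gb = gb := by simp [rv, inveHom, gb]
@[simp] lemma rv_a : rv ga = ga := by simp [rv, inveHom, ga]
@[simp] lemma rv_az (k : ℤ) : rv (ga ^ k) = ga ^ k := by
  simp [rv, inveHom, ga]
lemma rv_be (e : List ℤ) : rv (be e) = be e.reverse := by
  induction e with
  | nil => simp
  | cons k e ih =>
    rw [be_cons, rv_mul, rv_mul, ih, List.reverse_cons, be_append]; simp [mul_assoc]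

section words
variable {Λ : Type*} {M : Type*} [Monoid M]
/-- evaluation of a word -/
def ev (ψ : Λ → M) (w : List Λ) : M := (w.map ψ).prod
@[simp] lemma ev_nil (ψ : Λ → M) : ev ψ [] = 1 := rfl
@[simp] lemma ev_cons (ψ : Λ → M) (x : Λ) (w : List Λ) : ev ψ (x :: w) = ψ x * ev ψ w := by
  simp [ev]
lemma ev_append (ψ : Λ → M) (w w' : List Λ) : ev ψ (w ++ w') = ev ψ w * ev ψ w' := by
  simp [ev]
lemma ev_flatMap {Λ' : Type*} (ψ : Λ' → M) (σ : Λ → List Λ') (w : List Λ) :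
    ev ψ (w.flatMap σ) = ev (fun x => ev ψ (σ x)) w := by
  induction w with
  | nil => rfl
  | cons x w ih => simp [List.flatMap_cons, ev_append, ih]
lemma ev_hom {N : Type*} [Monoid N] (θ : M →* N) (ψ : Λ → M) (w : List Λ) :
    θ (ev ψ w) = ev (fun x => θ (ψ x)) w := by
  simp [ev, map_list_prod, Function.comp_def]
lemma ev_rv (ψ : Λ → GG) (w : List Λ) :
    ev (fun x => rv (ψ x)) w.reverse = rv (ev ψ w) := by
  induction w with
  | nil => simp
  | cons x w ih => simp [ev_append, ih, rv_mul]
end words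

section juncs
variable {Λ : Type*} (S T : Λ → ℤ) (g : Λ → Bool)
def hd : List Λ → ℤ
  | [] => 0
  | x :: _ => S x
@[simp] lemma hd_nil : hd S [] = 0 := rfl
@[simp] lemma hd_cons (x : Λ) (w : List Λ) : hd S (x :: w) = S x := rfl
def junc : List Λ → List (Bool × ℤ)
  | [] => []
  | x :: w => (g x, T x + hd S w) :: junc w
/-- expand tokens -/
def XX (E : Bool → List ℤ) (U : List (Bool × ℤ)) : List ℤ := U.flatMap (fun x => E x.1 ++ [x.2])

@[simp] lemma XX_nil (E : Bool → List ℤ) : XX E [] = [] := rfl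
@[simp] lemma XX_cons (E : Bool → List ℤ) (x) (U : List (Bool × ℤ)) :
    XX E (x :: U) = E x.1 ++ x.2 :: XX E U := by simp [XX]
lemma XX_append (E : Bool → List ℤ) (U V : List (Bool × ℤ)) :
    XX E (U ++ V) = XX E U ++ XX E V := by simp [XX]

lemma junc_fst (w : List Λ) : (junc S T g w).map Prod.fst = w.map g := by
  induction w with
  | nil => rfl
  | cons x w ih => simp [junc, ih]

lemma ev_junc (E : Bool → List ℤ) (w : List Λ) :
    ev (fun x => ga ^ S x * be (E (g x)) * ga ^ T x) w = ga ^ hd S w * pr (XX E (junc S T g w)) := by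
  induction w with
  | nil => simp [hd, junc]
  | cons x w ih =>
    simp only [ev_cons, ih, junc, hd_cons, XX_cons]
    rw [show E (g x) ++ (T x + hd S w) :: XX E (junc S T g w)
      = (E (g x) ++ [T x + hd S w]) ++ XX E (junc S T g w) by simp, pr_append, ← be_mul, zpow_add]
    simp [mul_assoc]

lemma ev_junc_iff (E : Bool → List ℤ) (w w' : List Λ) :
    ev (fun x => ga ^ S x * be (E (g x)) * ga ^ T x) w
      = ev (fun x => ga ^ S x * be (E (g x)) * ga ^ T x) w' ↔
    hd S w = hd S w' ∧ XX E (junc S T g w) = XX E (junc S T g w') := by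
  rw [ev_junc, ev_junc]
  exact ⟨fun h => pr_inj _ _ _ _ h, fun ⟨h1, h2⟩ => by rw [h1, h2]⟩
end juncs

end WE

namespace WE

def EE (e f : List ℤ) : Bool → List ℤ := fun b => bif b then f else e

@[simp] lemma EE_true (e f : List ℤ) : EE e f true = f := rfl
@[simp] lemma EE_false (e f : List ℤ) : EE e f false = e := rfl

/-- an equation whose left side starts with the letter `false`, right side with `true` -/
def LW (E : Bool → List ℤ) (c : ℤ) (U : List (Bool × ℤ)) (d : ℤ) (V : List (Bool × ℤ)) : Prop :=
  XX E ((false, c) :: U) = XX E ((true, d) :: V) ∧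
    (((false, c) :: U).map Prod.fst).Perm (((true, d) :: V).map Prod.fst)

def Leq (E : Bool → List ℤ) : Prop := ∃ c U d V, LW E c U d V

def sw (x : Bool × ℤ) : Bool × ℤ := (!x.1, x.2)

lemma XX_sw (e f : List ℤ) (U : List (Bool × ℤ)) : XX (EE f e) (U.map sw) = XX (EE e f) U := by
  induction U with
  | nil => rfl
  | cons x U ih => obtain ⟨b, d⟩ := x; cases b <;> simp [sw, ih]

lemma LW.swap {e f : List ℤ} {c U d V} (h : LW (EE e f) c U d V) :
    LW (EE f e) d (V.map sw) c (U.map sw) := by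
  obtain ⟨h1, h2⟩ := h
  constructor
  · have := XX_sw e f ((false, c) :: U)
    have h' := XX_sw e f ((true, d) :: V)
    simp only [List.map_cons, sw, Bool.not_false, Bool.not_true] at this h'
    unfold sw at *
    rw [this, h', h1]
  · have := (h2.symm).map Bool.not
    have hs : ∀ W : List (Bool × ℤ), (W.map Prod.fst).map Bool.not = (W.map sw).map Prod.fst := by
      intro W; simp [sw]
    rw [hs, hs] at this
    simpa [sw] using this

lemma Leq.swap {e f : List ℤ} (h : Leq (EE e f)) : Leq (EE f e) := by
  obtain ⟨c, U, d, V, h⟩ := h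
  exact ⟨_, _, _, _, h.swap⟩

def sg (c : ℤ) (x : Bool × ℤ) : List (Bool × ℤ) := bif x.1 then [(false, c), (true, x.2)] else [x]
def sg' (c : ℤ) (x : Bool × ℤ) : List (Bool × ℤ) := bif x.1 then [(true, c), (false, x.2)] else [x]

lemma XX_sg (e f : List ℤ) (c : ℤ) (U : List (Bool × ℤ)) :
    XX (EE e f) (U.flatMap (sg c)) = XX (EE e (e ++ c :: f)) U := by
  induction U with
  | nil => rfl
  | cons x U ih =>
    obtain ⟨b, d⟩ := x; cases b <;> simp [sg, List.flatMap_cons, XX_append, ih]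

lemma XX_sg' (e f : List ℤ) (c : ℤ) (U : List (Bool × ℤ)) :
    XX (EE e f) (U.flatMap (sg' c)) = XX (EE e (f ++ c :: e)) U := by
  induction U with
  | nil => rfl
  | cons x U ih =>
    obtain ⟨b, d⟩ := x; cases b <;> simp [sg', List.flatMap_cons, XX_append, ih]

lemma perm_flat {α β : Type*} (τ : (α × ℤ) → List (β × ℤ)) (τ0 : α → List β)
    (hτ : ∀ x, (τ x).map Prod.fst = τ0 x.1) (U V : List (α × ℤ))
    (h : (U.map Prod.fst).Perm (V.map Prod.fst)) :
    ((U.flatMap τ).map Prod.fst).Perm ((V.flatMap τ).map Prod.fst) := by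
  have : ∀ W : List (α × ℤ), (W.flatMap τ).map Prod.fst = (W.map Prod.fst).flatMap τ0 := by
    intro W; induction W with
    | nil => rfl
    | cons x W ih => simp [List.flatMap_cons, ih, hτ]
  rw [this, this]
  exact h.flatMap_right _

lemma LW.reduce {e f : List ℤ} {c U d V} (h : LW (EE e f) c U d V) (hl : e.length < f.length) :
    ∃ f', f = e ++ c :: f' ∧ ∃ c' U' V', LW (EE e f') c' U' d V' := by
  obtain ⟨h1, h2⟩ := h
  have hp : e ++ [c] <+: f := by
    have a1 : e ++ [c] <+: XX (EE e f) ((true, d) :: V) := by rw [← h1]; simp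
    have a2 : f <+: XX (EE e f) ((true, d) :: V) := by simp
    exact List.prefix_of_prefix_length_le a1 a2 (by simp; omega)
  obtain ⟨f', hf⟩ := hp
  have hf : f = e ++ c :: f' := by rw [← hf]; simp
  refine ⟨f', hf, ?_⟩
  have p2 := perm_flat (sg c) (fun b => bif b then [false, true] else [b])
    (by rintro ⟨b, z⟩; cases b <;> simp [sg]) _ _ h2
  subst hf
  rw [← XX_sg, ← XX_sg] at h1
  simp only [List.flatMap_cons, sg, cond_true, cond_false, List.cons_append, List.nil_append,
    XX_cons, List.append_cancel_left_eq, List.cons.injEq, true_and, List.map_cons] at h1 p2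
  have p2 := p2.cons_inv
  cases U with
  | nil =>
    have := h2.length_eq
    have := h2.subset (a := false)
    simp_all
  | cons x U =>
    obtain ⟨b, z⟩ := x
    cases b
    · exact ⟨z, U.flatMap (sg c), V.flatMap (sg c), by
        constructor
        · simpa [List.flatMap_cons, sg] using h1
        · simpa [List.flatMap_cons, sg] using p2⟩
    · exact ⟨c, (true, z) :: U.flatMap (sg c), V.flatMap (sg c), by
        constructor
        · simpa [List.flatMap_cons, sg] using h1
        · simpa [List.flatMap_cons, sg] using p2⟩

lemma LW.reduceR {e f f' : List ℤ} {c U d V z} (h : LW (EE e f) c U d V) (hf : f = f' ++ z :: e) :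
    Leq (EE e f') := by
  obtain ⟨h1, h2⟩ := h
  have p2 := perm_flat (sg' z) (fun b => bif b then [true, false] else [b])
    (by rintro ⟨b, z⟩; cases b <;> simp [sg']) _ _ h2
  subst hf
  rw [← XX_sg', ← XX_sg'] at h1
  refine ⟨c, U.flatMap (sg' z), z, (false, d) :: V.flatMap (sg' z), ?_, ?_⟩
  · simpa [List.flatMap_cons, sg'] using h1
  · simpa [List.flatMap_cons, sg'] using p2

lemma rep_of_shift (e : List ℤ) : ∀ c c', e ++ [c] = c' :: e → c = c' ∧ e = List.replicate e.length c := by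
  induction e with
  | nil => intro c c' h; simpa using h
  | cons x e ih =>
    intro c c' h
    simp only [List.cons_append, List.cons.injEq] at h
    obtain ⟨rfl, h⟩ := h
    obtain ⟨rfl, h2⟩ := ih _ _ h
    exact ⟨rfl, by rw [List.length_cons, List.replicate_succ, ← h2]⟩

lemma euclid : ∀ (n : ℕ) (e f : List ℤ), e.length + f.length ≤ n → e ≠ [] → f ≠ [] →
    Nat.Coprime (e.length + 1) (f.length + 1) → Leq (EE e f) → Leq (EE e.reverse f.reverse) →
    ∃ c, e = List.replicate e.length c ∧ f = List.replicate f.length c := by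
  intro n
  induction n with
  | zero => intro e f h he; cases e <;> simp_all
  | succ n ih =>
    have main : ∀ e f : List ℤ, e.length + f.length ≤ n + 1 → e ≠ [] → f ≠ [] →
        Nat.Coprime (e.length + 1) (f.length + 1) → Leq (EE e f) → Leq (EE e.reverse f.reverse) →
        e.length < f.length →
        ∃ c, e = List.replicate e.length c ∧ f = List.replicate f.length c := by
      intro e f hn he hf hco hL hR hlt
      obtain ⟨c, U, d, V, hL⟩ := hL
      obtain ⟨c2, U2, d2, V2, hR⟩ := hR
      obtain ⟨f1, hf1, _, _, _, hL1⟩ := hL.reduce hlt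
      obtain ⟨g2, hg2, _, _, _, hR2⟩ := hR.reduce (by simpa using hlt)
      have hf2 : f = g2.reverse ++ c2 :: e := by
        have := congrArg List.reverse hg2; simpa using this
      have hepos : 0 < e.length := List.length_pos_iff.2 he
      have hl1 : f.length = e.length + f1.length + 1 := by rw [hf1]; simp; omega
      have hl2 : f.length = e.length + g2.length + 1 := by rw [hf2]; simp; omega
      by_cases h1 : f1 = []
      · have hg : g2 = [] := List.length_eq_zero_iff.1 (by subst h1; simp at hl1; omega)
        subst h1; subst hg
        have hh : e ++ [c] = c2 :: e := by rw [← hf1, hf2]; simp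
        obtain ⟨rfl, h3⟩ := rep_of_shift _ _ _ hh
        refine ⟨c, h3, ?_⟩
        rw [hl2, hf2, h3]; simp [List.replicate_succ]
      · have hf1pos : 0 < f1.length := List.length_pos_iff.2 h1
        have hco1 : Nat.Coprime (e.length + 1) (f1.length + 1) := by
          have : f.length + 1 = (f1.length + 1) + (e.length + 1) := by omega
          rw [this] at hco
          simpa using hco
        have hne : e.length ≠ f1.length := by
          intro h
          rw [← h] at hco1
          have := (Nat.coprime_self _).1 hco1
          omega
        obtain ⟨x, hx1, hx2⟩ := ih e f1 (by omega) he h1 hco1 ⟨_, _, _, _, hL1⟩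
          (hR.reduceR (f' := f1.reverse) (z := c) (by rw [hf1]; simp))
        obtain ⟨y, hy1, hy2⟩ := ih e g2.reverse (by simp; omega) he
          (by intro h; simp at h; subst h; simp at hl2; omega)
          (by rw [List.length_reverse, show g2.length = f1.length by omega]; exact hco1)
          (hL.reduceR hf2) ⟨_, _, _, _, by simpa using hR2⟩
        have hxy : x = y := by
          have := hx1.symm.trans hy1
          rw [List.replicate_inj] at this
          rcases this.2 with h | h
          · omega
          · exact h
        subst hxy
        have hcx : c = x := by
          have a1 : f[e.length]? = some c := by rw [hf1]; simp
          rw [hf2, hy1, hy2] at a1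
          simp only [List.length_replicate, List.length_reverse] at a1
          rw [List.getElem?_append] at a1
          simp only [List.length_replicate, List.getElem?_cons, List.getElem?_replicate] at a1
          split_ifs at a1 <;> first | omega | simpa using a1.symm
        subst hcx
        refine ⟨c, hx1, ?_⟩
        rw [hl1, hf1, hx1, hx2]
        simp [← List.replicate_succ, List.replicate_append_replicate]; omega
    intro e f hn he hf hco hL hR
    rcases lt_trichotomy e.length f.length with h | h | h
    · exact main e f hn he hf hco hL hR h
    · exfalso
      rw [h] at hco; simp at hco; exact hf hco
    · obtain ⟨c, h1, h2⟩ := main f e (by omega) hf he hco.symm hL.swap hR.swap h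
      exact ⟨c, h2, h1⟩

lemma first_junc : ∀ (n : ℕ) (x : ℤ) (i j : ℕ), i + j ≤ n → i ≠ 0 → j ≠ 0 →
    Nat.Coprime (i + 1) (j + 1) → ∀ c U d V,
    LW (EE (List.replicate i x) (List.replicate j x)) c U d V → c = x ∧ d = x := by
  intro n
  induction n with
  | zero => intros; omega
  | succ n ih =>
    have main : ∀ (x : ℤ) (i j : ℕ), i + j ≤ n + 1 → i ≠ 0 → j ≠ 0 →
      Nat.Coprime (i + 1) (j + 1) → i < j → ∀ c U d V,
      LW (EE (List.replicate i x) (List.replicate j x)) c U d V → c = x ∧ d = x := by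
      intro x i j hn hi hj hco hlt c U d V h
      obtain ⟨f', hf, c', U', V', h'⟩ := h.reduce (by simpa using hlt)
      have hl := congrArg List.length hf
      simp at hl
      have hmem : ∀ z ∈ List.replicate i x ++ c :: f', z = x := by
        rw [← hf]; intro z hz; exact List.eq_of_mem_replicate hz
      refine ⟨hmem c (by simp), ?_⟩
      have hf' : f' = List.replicate f'.length x :=
        List.eq_replicate_iff.2 ⟨rfl, fun z hz => hmem z (by simp [hz])⟩
      by_cases h0 : f'.length = 0
      · have : f' = [] := List.length_eq_zero_iff.1 h0
        subst this
        have := h'.1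
        obtain ⟨i', rfl⟩ := Nat.exists_eq_succ_of_ne_zero hi
        simp [List.replicate_succ] at this
        exact this.1.symm
      · rw [hf'] at h'
        refine (ih x i f'.length (by omega) hi h0 ?_ _ _ _ _ h').2
        have : j + 1 = (f'.length + 1) + (i + 1) := by omega
        rw [this] at hco
        simpa using hco
    intro x i j hn hi hj hco c U d V h
    rcases lt_trichotomy i j with hh | hh | hh
    · exact main x i j hn hi hj hco hh _ _ _ _ h
    · subst hh; simp at hco; omega
    · exact (main x j i (by omega) hj hi hco.symm hh _ _ _ _ h.swap).symm

/-- junctions of the initial run of `false` letters -/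
def run (U : List (Bool × ℤ)) : List ℤ := (U.takeWhile (fun x => !x.1)).map Prod.snd

lemma run_length (U : List (Bool × ℤ)) : (run U).length ≤ (U.map Prod.fst).count false := by
  induction U with
  | nil => simp [run]
  | cons x U ih =>
    obtain ⟨b, z⟩ := x
    cases b
    · simp [run] at ih ⊢; omega
    · simp [run]

lemma XX_run (f : List ℤ) (U : List (Bool × ℤ)) (h : true ∈ U.map Prod.fst) :
    run U ++ f <+: XX (EE [] f) U := by
  induction U with
  | nil => simp at h
  | cons x U ih =>
    obtain ⟨b, z⟩ := x
    cases b
    · simp at h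
      have := ih (by simpa using h)
      simp only [run] at this
      simp [run]
      exact this
    · simp [run]

lemma LW.deg1 {f : List ℤ} {c U d V} (h : LW (EE [] f) c U d V) :
    f <+: run ((false, c) :: U) ++ f := by
  have h1 := XX_run f ((false, c) :: U) (h.2.symm.subset (by simp))
  rw [h.1] at h1
  exact List.prefix_of_prefix_length_le (by simp) h1 (by simp)

end WE

namespace WE

def mk (A B : GG) : GG →* GG := FreeGroup.lift (fun x => bif x then B else A)
@[simp] lemma mk_a (A B : GG) : mk A B ga = A := by simp [mk, ga]
@[simp] lemma mk_b (A B : GG) : mk A B gb = B := by simp [mk, gb]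

lemma mk_inj {A B : GG} (A' B' : GG) (h1 : mk A' B' A = ga) (h2 : mk A' B' B = gb) :
    Function.Injective (mk A B) := by
  have : (mk A' B').comp (mk A B) = MonoidHom.id _ := by
    refine FreeGroup.ext_hom _ _ ?_
    intro x
    cases x
    · change mk A' B' (mk A B ga) = ga
      simpa using h1
    · change mk A' B' (mk A B gb) = gb
      simpa using h2
  intro x y hxy
  have hx := DFunLike.congr_fun this x
  have hy := DFunLike.congr_fun this y
  simp only [MonoidHom.comp_apply, MonoidHom.id_apply] at hx hy
  rw [← hx, ← hy, hxy]

def sh (s t : ℤ) : GG →* GG := mk ga (ga ^ s * gb * ga ^ t)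

lemma sh_inj (s t : ℤ) : Function.Injective (sh s t) :=
  mk_inj ga (ga ^ (-s) * gb * ga ^ (-t)) (by simp) (by simp [mul_assoc])

@[simp] lemma sh_a (s t : ℤ) : sh s t ga = ga := by simp [sh]

@[simp] lemma sh_b (s t : ℤ) : sh s t gb = ga ^ s * gb * ga ^ t := by simp [sh]

lemma three : ∀ x y z : Fin 3, x ≠ y → x ≠ z → y ≠ z → ∀ l : Fin 3, l = x ∨ l = y ∨ l = z := by
  decide

lemma sh_be (s t : ℤ) (e : List ℤ) :
    sh s t (be e) = ga ^ s * be (e.map (fun k => k + (s + t))) * ga ^ t := by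
  induction e with
  | nil => simp [sh]
  | cons k e ih =>
    rw [be_cons, map_mul, ih, List.map_cons, be_cons]
    simp only [sh, map_mul, mk_b, map_zpow, mk_a]
    rw [show k + (s + t) = t + k + s by ring]
    simp only [zpow_add, mul_assoc]

/-- elements `a^c b a^{k₁} ... b a^{k_n}` -/
def Mdeg (n : ℕ) (g : GG) : Prop := ∃ (c : ℤ) (l : List ℤ), g = ga ^ c * pr l ∧ l.length = n

lemma Mdeg_a (k : ℤ) : Mdeg 0 (ga ^ k) := ⟨k, [], by simp, rfl⟩
lemma Mdeg_a' : Mdeg 0 ga := by simpa using Mdeg_a 1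
lemma Mdeg_a'' : Mdeg 0 ga⁻¹ := by simpa using Mdeg_a (-1)
lemma Mdeg_one : Mdeg 0 1 := by simpa using Mdeg_a 0
lemma Mdeg_b : Mdeg 1 gb := ⟨0, [0], by simp, rfl⟩
lemma Mdeg.mul {m n : ℕ} {g h : GG} (hg : Mdeg m g) (hh : Mdeg n h) : Mdeg (m + n) (g * h) := by
  obtain ⟨c, l, rfl, rfl⟩ := hg
  obtain ⟨d, k, rfl, rfl⟩ := hh
  rcases List.eq_nil_or_concat l with rfl | ⟨l', z, rfl⟩
  · exact ⟨c + d, k, by simp [zpow_add, mul_assoc], by simp⟩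
  · refine ⟨c, l' ++ [z + d] ++ k, ?_, by simp; omega⟩
    simp [pr_append, zpow_add, mul_assoc]

lemma Mdeg.pow {m : ℕ} {g : GG} (hg : Mdeg m g) (k : ℕ) : Mdeg (m * k) (g ^ k) := by
  induction k with
  | zero => simpa using Mdeg_one
  | succ k ih => rw [pow_succ]; exact ih.mul hg

lemma Mdeg_be (e : List ℤ) : Mdeg (e.length + 1) (be e) := by
  have := be_mul e 0
  simp only [zpow_zero, mul_one] at this
  exact ⟨0, e ++ [0], by simp [this], by simp⟩

lemma Mdeg.form {n : ℕ} {g : GG} (h : Mdeg n g) (hn : 0 < n) :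
    ∃ (s : ℤ) (e : List ℤ) (t : ℤ), g = ga ^ s * be e * ga ^ t ∧ e.length + 1 = n := by
  obtain ⟨c, l, rfl, rfl⟩ := h
  rcases List.eq_nil_or_concat l with rfl | ⟨l', z, rfl⟩
  · simp at hn
  · exact ⟨c, l', z, by rw [mul_assoc, be_mul]; simp, by simp⟩

/-- role form -/
def RF (ψ : Fin 3 → GG) : Prop := ∃ (r p q : Fin 3) (i j : ℕ), r ≠ p ∧ r ≠ q ∧ p ≠ q ∧
  ψ r = ga ∧ Mdeg i (ψ p) ∧ Mdeg j (ψ q) ∧ 0 < i ∧ 0 < j ∧ Nat.Coprime i j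

lemma prefix_all (P : ℤ → Prop) (C f : List ℤ) (h : f <+: C ++ f) (hC : C ≠ [])
    (hP : ∀ c ∈ C, P c) : ∀ k ∈ f, P k := by
  have hpos : 0 < C.length := List.length_pos_iff.2 hC
  have key : ∀ n : ℕ, ∀ k, f[n]? = some k → P k := by
    intro n
    induction n using Nat.strong_induction_on with
    | _ n ih =>
      intro k hk
      have hlt : n < f.length := by
        by_contra hh
        rw [List.getElem?_eq_none (by omega)] at hk; simp at hk
      have h2 : (C ++ f)[n]? = some k := by
        obtain ⟨R, hR⟩ := h
        rw [← hR, List.getElem?_append_left hlt, hk]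
      rw [List.getElem?_append] at h2
      split_ifs at h2 with h3
      · exact hP k (List.mem_of_getElem? h2)
      · exact ih _ (by omega) k h2
  intro k hk
  obtain ⟨n, hn⟩ := List.mem_iff_getElem?.1 hk
  exact key n k hn

lemma split_ne {α : Type*} : ∀ (u v : List α), u.length = v.length → u ≠ v →
    ∃ w a b u' v', u = w ++ a :: u' ∧ v = w ++ b :: v' ∧ a ≠ b := by
  intro u
  induction u with
  | nil => intro v h1 h2; cases v <;> simp_all
  | cons x u ih =>
    intro v h1 h2
    cases v with
    | nil => simp at h1
    | cons y v =>
      by_cases hxy : x = y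
      · subst hxy
        obtain ⟨w, a, b, u', v', rfl, rfl, hab⟩ := ih v (by simpa using h1) (by simpa using h2)
        exact ⟨x :: w, a, b, u', v', rfl, rfl, hab⟩
      · exact ⟨[], x, y, u, v, rfl, rfl, hxy⟩

lemma be_zero (n : ℕ) : be (List.replicate n 0) = gb ^ (n + 1) := by
  induction n with
  | zero => simp
  | succ n ih => rw [List.replicate_succ, be_cons, ih, pow_succ' gb (n+1)]; simp

lemma be_neg (n : ℕ) : be (List.replicate n (-1)) = gb * (ga⁻¹ * gb) ^ n := by
  induction n with
  | zero => simp
  | succ n ih => rw [List.replicate_succ, be_cons, ih, pow_succ']; simp [mul_assoc]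

lemma img_nonneg (e : List ℤ) (h : ∀ k ∈ e, 0 ≤ k) : ∃ n, Mdeg n (mk (ga⁻¹ * gb) ga (be e)) := by
  induction e with
  | nil => exact ⟨0, by simpa using Mdeg_a'⟩
  | cons k e ih =>
    obtain ⟨n, hn⟩ := ih (fun z hz => h z (by simp [hz]))
    obtain ⟨m, rfl⟩ := Int.eq_ofNat_of_zero_le (h k (by simp))
    have h1 := (Mdeg_a'.mul ((Mdeg_a''.mul Mdeg_b).pow m)).mul hn
    refine ⟨_, Eq.mp (congrArg _ ?_) h1⟩
    rw [be_cons, map_mul, map_mul, map_zpow, mk_a, mk_b, zpow_natCast]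

lemma img_nonpos (e : List ℤ) (h : ∀ k ∈ e, k ≤ 0) : ∃ n, Mdeg n (mk gb⁻¹ ga (be e)) := by
  induction e with
  | nil => exact ⟨0, by simpa using Mdeg_a'⟩
  | cons k e ih =>
    obtain ⟨n, hn⟩ := ih (fun z hz => h z (by simp [hz]))
    obtain ⟨m, hm⟩ := Int.exists_eq_neg_ofNat (h k (by simp))
    have h1 := (Mdeg_a'.mul (Mdeg_b.pow m)).mul hn
    refine ⟨_, Eq.mp (congrArg _ ?_) h1⟩
    rw [be_cons, map_mul, map_mul, map_zpow, mk_a, mk_b, hm, inv_zpow, zpow_neg, inv_inv,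
        zpow_natCast]

/-- ending 0 -/
lemma end0 (ψ : Fin 3 → GG) (x y z : Fin 3) (hxy : x ≠ y) (hxz : x ≠ z) (hyz : y ≠ z)
    (i j : ℕ) (hi : 0 < i) (hj : 0 < j) (hco : Nat.Coprime i j)
    (hx : ψ x = gb ^ i) (hz : ψ z = ga⁻¹ * gb ^ j) (hy : ψ y = ψ z * ga) :
    ∃ θ : GG →* GG, Function.Injective θ ∧ RF (fun l => θ (ψ l)) := by
  refine ⟨mk (gb ^ j * ga⁻¹) gb, mk_inj (ga⁻¹ * gb ^ j) gb (by simp) (by simp),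
    z, x, y, i, j, hxz.symm, hyz.symm, hxy, ?_, ?_, ?_, hi, hj, hco⟩
  · simp [hz]
  · simpa [hx] using Mdeg_b.pow i
  · have := (Mdeg_a'.mul (Mdeg_b.pow j)).mul Mdeg_a''
    simpa [hy, hz, mul_assoc] using this

lemma end1 (ψ : Fin 3 → GG) (x y z : Fin 3) (hxy : x ≠ y) (hxz : x ≠ z) (hyz : y ≠ z)
    (i j : ℕ) (hco : Nat.Coprime (i+1) (j+1))
    (hx : ψ x = gb * (ga⁻¹ * gb) ^ i) (hz : ψ z = ga⁻¹ * (gb * (ga⁻¹ * gb) ^ j) * ga⁻¹)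
    (hy : ψ y = ψ z * ga) :
    ∃ θ : GG →* GG, Function.Injective θ ∧ RF (fun l => θ (ψ l)) := by
  have ht : mk (ga⁻¹ * gb ^ (j+1)) (ga⁻¹ * gb ^ (j + 1 + 1)) (ga⁻¹ * gb) = gb := by
    rw [map_mul, map_inv, mk_a, mk_b, pow_succ gb (j+1)]; group
  have hz' : ψ z = (ga⁻¹ * gb) ^ (j+1) * ga⁻¹ := by
    rw [hz, pow_succ' _ j]; simp [mul_assoc]
  have hy' : ψ y = (ga⁻¹ * gb) ^ (j+1) := by rw [hy, hz']; simp
  have hx' : ψ x = ga * (ga⁻¹ * gb) ^ (i+1) := by rw [hx, pow_succ' _ i]; simp [mul_assoc]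
  refine ⟨mk (ga⁻¹ * gb ^ (j+1)) (ga⁻¹ * gb ^ (j + 1 + 1)),
    mk_inj ((ga⁻¹ * gb) ^ (j+1) * ga⁻¹) (ga⁻¹ * gb) ?_ ?_,
    z, x, y, (j + 1) + (i + 1), j+1, hxz.symm, hyz.symm, hxy, ?_, ?_, ?_, by omega, by omega, ?_⟩
  · simp
  · rw [pow_succ gb (j+1)]; simp [mul_assoc]
  · beta_reduce; rw [hz', map_mul, map_pow, ht]; simp
  · beta_reduce; rw [hx', map_mul, map_pow, ht, mk_a, mul_assoc, ← pow_add]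
    simpa using Mdeg_a''.mul (Mdeg_b.pow ((j+1)+(i+1)))
  · beta_reduce; rw [hy', map_pow, ht]
    simpa using Mdeg_b.pow (j+1)
  · simpa using hco

end WE

namespace WE

lemma junc_mem {Λ : Type*} (S T : Λ → ℤ) (g : Λ → Bool) (P : Bool → ℤ → Prop)
    (h : ∀ l w, P (g l) (T l + hd S w)) (w : List Λ) : ∀ k ∈ junc S T g w, P k.1 k.2 := by
  induction w with
  | nil => intro k hk; simp [junc] at hk
  | cons x w ih =>
    intro k hk
    simp only [junc, List.mem_cons] at hk
    rcases hk with rfl | hk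
    · exact h _ _
    · exact ih k hk

lemma run_mem (U : List (Bool × ℤ)) (c : ℤ) (h : c ∈ run U) : (false, c) ∈ U := by
  simp only [run, List.mem_map] at h
  obtain ⟨⟨b, d⟩, h, rfl⟩ := h
  have h2 := List.mem_takeWhile_imp h
  have h3 := (List.takeWhile_prefix _).subset h
  simp at h2
  subst h2
  exact h3

lemma LW.deg1_all {f : List ℤ} {c U d V} (h : LW (EE [] f) c U d V) (P : ℤ → Prop)
    (hP : ∀ k ∈ (false, c) :: U, k.1 = false → P k.2) : ∀ k ∈ f, P k := by
  refine prefix_all P _ f h.deg1 (by simp [run]) ?_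
  intro k hk
  exact hP _ (run_mem _ _ hk) rfl

lemma LW.deg1_all' {e : List ℤ} {c U d V} (h : LW (EE e []) c U d V) (P : ℤ → Prop)
    (hP : ∀ k ∈ (true, d) :: V, k.1 = true → P k.2) : ∀ k ∈ e, P k := by
  refine h.swap.deg1_all P ?_
  intro k hk hk1
  simp only [List.mem_cons, List.mem_map] at hk
  rcases hk with rfl | ⟨k', hk', rfl⟩
  · exact hP (true, d) (by simp) rfl
  · exact hP k' (by simp [hk']) (by simpa [sw] using hk1)

lemma alpha (ψ : Fin 3 → GG) (x y z : Fin 3) (hxy : x ≠ y) (hxz : x ≠ z) (hyz : y ≠ z)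
    (e f : List ℤ) (t : ℤ) (hco : Nat.Coprime (e.length + 1) (f.length + 1))
    (hx : ψ x = be e) (hz : ψ z = ga ^ (-1 : ℤ) * be f * ga ^ t) (hy : ψ y = ψ z * ga)
    (u v : List (Fin 3)) (hp : (y :: u).Perm (z :: v))
    (hev : ev ψ (y :: u) = ev ψ (z :: v)) (lu : Fin 3) (u' v' : List (Fin 3))
    (hlu : lu ≠ x) (hu : u = lu :: u') (hv : v = x :: v') :
    ∃ θ : GG →* GG, Function.Injective θ ∧ RF (fun l => θ (ψ l)) := by
  have hl : ∀ l : Fin 3, l = x ∨ l = y ∨ l = z := by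
    exact three x y z hxy hxz hyz
  let S : Fin 3 → ℤ := fun l => if l = x then 0 else -1
  let T : Fin 3 → ℤ := fun l => if l = x then 0 else if l = y then t + 1 else t
  let g : Fin 3 → Bool := fun l => if l = x then false else true
  have hSx : S x = 0 := by simp [S]
  have hTx : T x = 0 := by simp [T]
  have hTy : T y = t + 1 := by simp [T, hxy.symm]
  have hTz : T z = t := by simp [T, hxz.symm, hyz.symm]
  have hgx : g x = false := by simp [g]
  have hgn : ∀ l, l ≠ x → g l = true := by intro l h; simp [g, h]
  have hSn : ∀ l, l ≠ x → S l = -1 := by intro l h; simp [S, h]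
  have hSall : ∀ w, hd S w = 0 ∨ hd S w = -1 := by
    intro w; cases w with
    | nil => simp
    | cons l w => by_cases h : l = x <;> simp [S, h]
  have hTl : ∀ l, T l = 0 ∨ T l = t ∨ T l = t + 1 := by
    intro l; rcases hl l with rfl | rfl | rfl <;> simp [*]
  have hTall : ∀ w, hd T w = 0 ∨ hd T w = t ∨ hd T w = t + 1 := by
    intro w; cases w with
    | nil => simp
    | cons l w => simpa using hTl l
  have hTn : ∀ l, l ≠ x → T l = t ∨ T l = t + 1 := by
    intro l h; rcases hl l with rfl | rfl | rfl <;> simp_all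
  have hψ : ψ = fun l => ga ^ S l * be (EE e f (g l)) * ga ^ T l := by
    funext l
    rcases hl l with rfl | rfl | rfl
    · simp [hSx, hTx, hgx, hx]
    · rw [hy, hz, hSn _ hxy.symm, hgn _ hxy.symm, hTy, zpow_add]; simp [mul_assoc]
    · rw [hz, hSn _ hxz.symm, hgn _ hxz.symm, hTz]; simp
  have hψr : (fun l => rv (ψ l)) = fun l => ga ^ T l * be (EE e.reverse f.reverse (g l)) * ga ^ S l := by
    funext l
    rw [hψ]
    simp only [rv_mul, rv_az, rv_be, mul_assoc]
    cases g l <;> simp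
  -- left
  have hL : LW (EE e f) (T x + hd S v') (junc S T g v') (T lu + hd S u') (junc S T g u') := by
    constructor
    · rw [ev_cons, ev_cons, hy, mul_assoc] at hev
      have h1 := mul_left_cancel hev
      rw [hψ, ev_junc, ev_junc, ← mul_assoc, ← zpow_one_add] at h1
      have := (pr_inj _ _ _ _ h1).2
      rw [hu, hv] at this
      simpa [junc, hgx, hgn _ hlu] using this.symm
    · have := (hp.map g).symm
      rw [List.map_cons, List.map_cons, hgn _ hxz.symm, hgn _ hxy.symm] at this
      have := this.cons_inv
      rw [hu, hv, ← junc_fst S T, ← junc_fst S T] at this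
      simpa [junc, hgx, hgn _ hlu] using this
  -- right
  have hR : ∃ b u1 v1, b ≠ x ∧ T b = 0 ∧
      LW (EE e.reverse f.reverse) (S x + hd T u1) (junc T S g u1) (S b + hd T v1) (junc T S g v1) := by
    have hevr : ev (fun l => rv (ψ l)) (y :: u).reverse = ev (fun l => rv (ψ l)) (z :: v).reverse := by
      rw [ev_rv, ev_rv, hev]
    have hpr : (y :: u).reverse.Perm (z :: v).reverse :=
      (List.reverse_perm _).trans (hp.trans (List.reverse_perm _).symm)
    obtain ⟨w, a, b, u1, v1, h1, h2, hab⟩ := split_ne _ _ hpr.length_eq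
      (by intro h; have := List.reverse_injective h; simp at this; exact hyz this.1)
    rw [h1, h2] at hevr hpr
    have hpr := ((List.perm_append_left_iff _).1 hpr).map g
    rw [ev_append, ev_append] at hevr
    have hevr := mul_left_cancel hevr
    rw [hψr, ev_junc_iff] at hevr
    obtain ⟨h3, h4⟩ := hevr
    rw [← junc_fst T S, ← junc_fst T S] at hpr
    simp only [hd_cons] at h3
    by_cases ha : a = x
    · subst ha
      refine ⟨b, u1, v1, hab.symm, by rw [← h3, hTx], ?_, ?_⟩
      · simpa only [junc, hgx, hgn _ hab.symm] using h4
      · simpa only [junc, hgx, hgn _ hab.symm] using hpr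
    · by_cases hb : b = x
      · subst hb
        refine ⟨a, v1, u1, hab, by rw [h3, hTx], ?_, ?_⟩
        · simpa only [junc, hgx, hgn _ hab] using h4.symm
        · simpa only [junc, hgx, hgn _ hab] using hpr.symm
      · exfalso
        rcases hl a with rfl | rfl | rfl <;> rcases hl b with rfl | rfl | rfl <;> simp_all
  obtain ⟨b, u1, v1, hbx, hTb, hR⟩ := hR
  have ht : t = 0 ∨ t = -1 := by
    rcases hTn b hbx with h | h
    · left; omega
    · right; omega
  have hLj : T x + hd S v' = 0 ∨ T x + hd S v' = -1 := by
    rw [hTx]; rcases hSall v' with h | h <;> simp [h]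
  by_cases hf : f = []
  · -- z has degree one
    subst hf
    have he : ∀ k ∈ e, t - 1 ≤ k := by
      refine hL.deg1_all' (fun k => t - 1 ≤ k) ?_
      have : junc S T g (lu :: u') = (true, T lu + hd S u') :: junc S T g u' := by
        simp [junc, hgn _ hlu]
      rw [← this]
      refine junc_mem S T g (fun b k => b = true → t - 1 ≤ k) ?_ _
      intro l w hgl
      have hlx : l ≠ x := by rintro rfl; simp [hgx] at hgl
      rcases hTn l hlx with h | h <;> rcases hSall w with h' | h' <;> rw [h, h'] <;> omega
    obtain ⟨n, hn⟩ := img_nonneg (e.map (fun k => k + (1 + -t))) (by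
      intro k hk
      simp only [List.mem_map] at hk
      obtain ⟨k', hk', rfl⟩ := hk
      have := he k' hk'; omega)
    obtain ⟨m, hm⟩ : ∃ m : ℕ, -t = m := ⟨(-t).toNat, by omega⟩
    have hAB := Mdeg_a''.mul Mdeg_b
    have hX := (hAB.mul hn).mul (hAB.pow m)
    refine ⟨(mk (ga⁻¹ * gb) ga).comp (sh 1 (-t)), ?_, z, x, y, _, 1, hxz.symm, hyz.symm, hxy, ?_,
      Eq.mp (congrArg _ ?_) hX, ?_, by omega, by omega, by simp⟩
    · exact (mk_inj gb (gb * ga) (by simp) (by simp)).comp (sh_inj _ _)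
    · simp only [hz, MonoidHom.comp_apply, map_mul, map_zpow, sh_a, sh_b, be_nil,
        mk_a, mk_b]; group
    · simp only [hx, MonoidHom.comp_apply, sh_be, map_mul, map_zpow, mk_a]
      rw [hm]; simp
    · have : (((mk (ga⁻¹ * gb) ga).comp (sh 1 (-t))) (ψ y)) = gb := by
        simp only [hy, hz, MonoidHom.comp_apply, map_mul, map_zpow, sh_a, sh_b, be_nil,
          mk_a, mk_b]; group
      beta_reduce
      rw [this]; exact Mdeg_b
  by_cases he : e = []
  · subst he
    have hf1 : ∀ k ∈ f, k ≤ 0 := by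
      refine hL.deg1_all (fun k => k ≤ 0) ?_
      have : junc S T g (x :: v') = (false, T x + hd S v') :: junc S T g v' := by
        simp [junc, hgx]
      rw [← this]
      refine junc_mem S T g (fun b k => b = false → k ≤ 0) ?_ _
      intro l w hgl
      have hlx : l = x := by by_contra h; simp [hgn l h] at hgl
      rw [hlx, hTx]; rcases hSall w with h' | h' <;> omega
    rcases ht with ht | ht
    · have hf2 : ∀ k ∈ f, 0 ≤ k := by
        have := hR.deg1_all (fun k => 0 ≤ k) (by
          have : junc T S g (x :: u1) = (false, S x + hd T u1) :: junc T S g u1 := by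
            simp [junc, hgx]
          rw [← this]
          refine junc_mem T S g (fun b k => b = false → 0 ≤ k) ?_ _
          intro l w hgl
          have hlx : l = x := by by_contra h; simp [hgn l h] at hgl
          rw [hlx, hSx]; rcases hTall w with h' | h' | h' <;> omega)
        intro k hk; exact this k (by simpa using hk)
      have hf0 : f = List.replicate f.length 0 :=
        List.eq_replicate_iff.2 ⟨rfl, fun k hk => le_antisymm (hf1 k hk) (hf2 k hk)⟩
      refine end0 ψ x y z hxy hxz hyz 1 (f.length + 1) (by omega) (by omega) (by simp) ?_ ?_ hy
      · simp [hx]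
      · rw [hz, ht, hf0, be_zero]; simp
    · obtain ⟨n, hn⟩ := img_nonpos f hf1
      have hY := Mdeg_b.mul hn
      have hZ := hY.mul Mdeg_b
      refine ⟨mk gb⁻¹ ga, mk_inj gb ga⁻¹ (by simp) (by simp), x, y, z, _, _, hxy, hxz, hyz, ?_,
        Eq.mp (congrArg _ ?_) hY, Eq.mp (congrArg _ ?_) hZ, by omega, by omega, by simp⟩
      · simp [hx]
      · simp [hy, hz, ht]
      · simp [hz, ht]
  · obtain ⟨c, hc1, hc2⟩ := euclid _ e f le_rfl he hf hco ⟨_, _, _, _, hL⟩ ⟨_, _, _, _, hR⟩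
    have hel : e.length ≠ 0 := by simpa using he
    have hfl : f.length ≠ 0 := by simpa using hf
    have hL' := hL
    rw [hc1, hc2] at hL' hR
    rw [List.reverse_replicate, List.reverse_replicate] at hR
    have hc := (first_junc _ c _ _ le_rfl hel hfl hco _ _ _ _ hL').1
    obtain ⟨hc3, hc4⟩ := first_junc _ c _ _ le_rfl hel hfl hco _ _ _ _ hR
    rw [hSx] at hc3
    rw [hSn b hbx] at hc4
    rw [hc] at hLj
    rcases hLj with h0 | h0
    · have : t = 0 := by
        rcases hTall v1 with h | h | h <;> omega
      refine end0 ψ x y z hxy hxz hyz (e.length + 1) (f.length + 1) (by omega) (by omega) hco ?_ ?_ hy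
      · rw [hx, hc1, h0, be_zero]; simp
      · rw [hz, this, hc2, h0, be_zero]; simp
    · have : t = -1 := by
        rcases hTall u1 with h | h | h <;> omega
      refine end1 ψ x y z hxy hxz hyz e.length f.length hco ?_ ?_ hy
      · rw [hx, hc1, h0, be_neg]; simp
      · rw [hz, this, hc2, h0, be_neg]; simp

end WE

namespace WE

lemma inv_be (e : List ℤ) : mk ga⁻¹ gb (be e) = be (e.map (fun k => -k)) := by
  induction e with
  | nil => simp
  | cons k e ih => rw [be_cons, map_mul, ih, List.map_cons, be_cons]; simp

lemma case3 (ψ : Fin 3 → GG) (x y z : Fin 3) (hxy : x ≠ y) (hxz : x ≠ z) (hyz : y ≠ z)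
    (i j : ℕ) (hi : 0 < i) (hj : 0 < j) (hco : Nat.Coprime i j)
    (hx : Mdeg i (ψ x)) (hz : Mdeg j (ψ z)) (hy : ψ y = ψ z * ga)
    (u v : List (Fin 3)) (hp : (y :: u).Perm (z :: v))
    (hev : ev ψ (y :: u) = ev ψ (z :: v)) :
    ∃ θ : GG →* GG, Function.Injective θ ∧ RF (fun l => θ (ψ l)) := by
  obtain ⟨s, e, t, hx0, rfl⟩ := hx.form hi
  obtain ⟨s', f, t', hz0, rfl⟩ := hz.form hj
  clear hx hz
  set ψ1 : Fin 3 → GG := fun l => sh (-s) (-t) (ψ l) with hψ1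
  set e1 := e.map (fun k => k + (-s + -t)) with he1
  set f1 := f.map (fun k => k + (-s + -t)) with hf1
  have hx1 : ψ1 x = be e1 := by
    simp only [hψ1, hx0, map_mul, map_zpow, sh_a, sh_be]
    simp [mul_assoc, he1]
  have hz1 : ψ1 z = ga ^ (s' - s) * be f1 * ga ^ (t' - t) := by
    simp only [hψ1, hz0, map_mul, map_zpow, sh_a, sh_be]
    rw [show t' - t = - t + t' by ring, sub_eq_add_neg, zpow_add, zpow_add]
    simp only [mul_assoc, hf1]
  have hy1 : ψ1 y = ψ1 z * ga := by simp [hψ1, hy]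
  have hev1 : ev ψ1 (y :: u) = ev ψ1 (z :: v) := by
    rw [hψ1, ← ev_hom, ← ev_hom, hev]
  have hco1 : Nat.Coprime (e1.length + 1) (f1.length + 1) := by simpa [he1, hf1] using hco
  have hl := three x y z hxy hxz hyz
  suffices hs : ∃ θ : GG →* GG, Function.Injective θ ∧ RF (fun l => θ (ψ1 l)) by
    obtain ⟨θ, h1, h2⟩ := hs
    exact ⟨θ.comp (sh (-s) (-t)), h1.comp (sh_inj _ _), h2⟩
  generalize s' - s = s1 at hz1
  generalize t' - t = t1 at hz1
  clear_value ψ1 e1 f1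
  clear hx0 hz0 hy hev hco
  -- heads
  cases u with
  | nil => have := hp.symm.subset (a := z); simp [hyz.symm] at this
  | cons lu u' =>
  cases v with
  | nil => have := hp.subset (a := y); simp [hyz] at this
  | cons lv v' =>
  let S : Fin 3 → ℤ := fun l => if l = x then 0 else s1
  let T : Fin 3 → ℤ := fun l => if l = x then 0 else if l = y then t1 + 1 else t1
  let g : Fin 3 → Bool := fun l => if l = x then false else true
  have hψ : ψ1 = fun l => ga ^ S l * be (EE e1 f1 (g l)) * ga ^ T l := by
    funext l
    rcases hl l with rfl | rfl | rfl
    · simp [S, T, g, hx1]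
    · simp [S, T, g, hy1, hz1, hxy.symm, zpow_add, mul_assoc]
    · simp [S, T, g, hz1, hxz.symm, hyz.symm]
  have hlead : 1 + S lu = S lv := by
    have h := hev1
    rw [ev_cons ψ1 y, ev_cons ψ1 z, hy1, mul_assoc] at h
    have h1 := mul_left_cancel h
    rw [hψ, ev_junc, ev_junc, ← mul_assoc, ← zpow_one_add] at h1
    exact (pr_inj _ _ _ _ h1).1
  by_cases h1 : lu = x
  · by_cases h2 : lv = x
    · simp [S, h1, h2] at hlead
    · simp [S, h1, h2] at hlead
      subst hlead
      have := alpha (fun l => mk ga⁻¹ gb (ψ1 l)) x z y hxz hxy hyz.symm (e1.map (fun k => -k))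
        (f1.map (fun k => -k)) (-t1 - 1) (by simpa using hco1) (by simp only [hx1, inv_be])
        (by
          simp only [hy1, hz1, map_mul, map_zpow, mk_a, inv_be, zpow_sub, zpow_neg, inv_zpow,
            mul_assoc, zpow_one])
        (by simp [hy1]) (lv :: v') (lu :: u') hp.symm
        (by rw [← ev_hom, ← ev_hom, hev1]) lv v' u' h2 rfl (by rw [h1])
      obtain ⟨θ, h3, h4⟩ := this
      exact ⟨θ.comp (mk ga⁻¹ gb), h3.comp (mk_inj ga⁻¹ gb (by simp) (by simp)), h4⟩
  · by_cases h2 : lv = x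
    · simp [S, h1, h2] at hlead
      have hs1 : s1 = -1 := by omega
      subst hs1
      exact alpha ψ1 x y z hxy hxz hyz e1 f1 t1 hco1 hx1 hz1 hy1 (lu :: u') (lv :: v') hp hev1
        lu u' v' h1 rfl (by rw [h2])
    · simp [S, h1, h2] at hlead

lemma RF.get {ψ : Fin 3 → GG} (h : RF ψ) : ∃ r, ψ r = ga ∧ ∀ p q, r ≠ p → r ≠ q → p ≠ q →
    ∃ i j, Mdeg i (ψ p) ∧ Mdeg j (ψ q) ∧ 0 < i ∧ 0 < j ∧ Nat.Coprime i j := by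
  obtain ⟨r, p, q, i, j, h1, h2, h3, h4, h5, h6, h7, h8, h9⟩ := h
  refine ⟨r, h4, ?_⟩
  intro p' q' hp hq hpq
  rcases three r p q h1 h2 h3 p' with rfl | rfl | rfl
  · exact absurd rfl hp
  · rcases three r p' q h1 h2 h3 q' with rfl | rfl | rfl
    · exact absurd rfl hq
    · exact absurd rfl hpq
    · exact ⟨i, j, h5, h6, h7, h8, h9⟩
  · rcases three r p p' h1 h2 h3 q' with rfl | rfl | rfl
    · exact absurd rfl hq
    · exact ⟨j, i, h6, h5, h8, h7, h9.symm⟩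
    · exact absurd rfl hpq

section
variable {n : ℕ} {β : Type*} (h : Fin n → List β)
@[simp] lemma mA_nil : mApply h [] = [] := rfl
@[simp] lemma mA_cons (x) (w) : mApply h (x :: w) = h x ++ mApply h w := by simp [mApply]
lemma mA_append (w w') : mApply h (w ++ w') = mApply h w ++ mApply h w' := by simp [mApply]
lemma mA_flatMap (σ : Fin n → List (Fin n)) (w : List (Fin n)) :
    mApply h (w.flatMap σ) = mApply (fun x => mApply h (σ x)) w := by
  induction w with
  | nil => rfl
  | cons x w ih => simp [List.flatMap_cons, mA_append, ih]
end

/-- evaluation of binary words -/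
def bw (X Y : List ℕ) (w : List Bool) : List ℕ := w.flatMap (fun b => bif b then Y else X)
@[simp] lemma bw_nil (X Y) : bw X Y [] = [] := rfl
@[simp] lemma bw_cons (X Y b w) : bw X Y (b :: w) = (bif b then Y else X) ++ bw X Y w := by
  simp [bw]
lemma bw_sub (X Y : List ℕ) (w : List Bool) :
    bw X (X ++ Y) w = bw X Y (w.flatMap (fun b => bif b then [false, true] else [false])) := by
  induction w with
  | nil => rfl
  | cons b w ih => cases b <;> simp [ih, List.flatMap_cons]
lemma bw_swap (X Y : List ℕ) (w : List Bool) : bw Y X (w.map Bool.not) = bw X Y w := by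
  induction w with
  | nil => rfl
  | cons b w ih => cases b <;> simp [ih]

lemma comm_of_rel : ∀ (n : ℕ) (X Y : List ℕ), X.length + Y.length ≤ n → ∀ u v : List Bool,
    bw X Y (false :: u) = bw X Y (true :: v) → X ++ Y = Y ++ X := by
  intro n
  induction n with
  | zero =>
    intro X Y h
    have h1 : X = [] := List.length_eq_zero_iff.1 (by omega)
    have h2 : Y = [] := List.length_eq_zero_iff.1 (by omega)
    simp [h1, h2]
  | succ n ih =>
    have main : ∀ (X Y : List ℕ), X.length + Y.length ≤ n + 1 → X.length ≤ Y.length →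
        ∀ u v : List Bool,
        bw X Y (false :: u) = bw X Y (true :: v) → X ++ Y = Y ++ X := by
      intro X Y hn hle u v h
      by_cases hX : X = []
      · simp [hX]
      have hXl : 0 < X.length := List.length_pos_iff.2 hX
      have hpre : X <+: Y := by
        have a1 : X <+: bw X Y (true :: v) := by rw [← h]; simp
        have a2 : Y <+: bw X Y (true :: v) := by simp
        exact List.prefix_of_prefix_length_le a1 a2 hle
      obtain ⟨Z, rfl⟩ := hpre
      simp only [bw_cons, cond_true, cond_false, List.append_assoc, List.append_cancel_left_eq] at h
      cases u with
      | nil => simp at h; simp [h.1]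
      | cons b u =>
        have h3 : X ++ Z = Z ++ X := by
          rw [bw_sub, bw_sub] at h
          simp only [List.length_append] at hn
          cases b
          · refine ih X Z (by omega) (u.flatMap (fun b => bif b then [false, true] else [false]))
              (v.flatMap (fun b => bif b then [false, true] else [false])) ?_
            simpa [List.flatMap_cons] using h
          · refine ih X Z (by omega)
              (true :: u.flatMap (fun b => bif b then [false, true] else [false]))
              (v.flatMap (fun b => bif b then [false, true] else [false])) ?_
            simpa [List.flatMap_cons] using h
        rw [List.append_assoc, ← h3]
    intro X Y hn u v h
    rcases le_total X.length Y.length with hh | hh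
    · exact main X Y hn hh u v h
    · refine (main Y X (by omega) hh (v.map Bool.not) (u.map Bool.not) ?_).symm
      rw [← bw_swap, ← bw_swap X Y] at h
      simpa using h.symm

lemma bw_inj (X Y : List ℕ) (hXY : X ++ Y ≠ Y ++ X) : ∀ u v : List Bool,
    bw X Y u = bw X Y v → u = v := by
  have hX : X ≠ [] := by rintro rfl; simp at hXY
  have hY : Y ≠ [] := by rintro rfl; simp at hXY
  intro u
  induction u with
  | nil => intro v h; cases v with
    | nil => rfl
    | cons b v => cases b <;> simp_all
  | cons b u ih =>
    intro v h
    cases v with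
    | nil => cases b <;> simp_all
    | cons b' v =>
      cases b <;> cases b'
      · simp at h; rw [ih v h]
      · exact absurd (comm_of_rel _ X Y le_rfl u v h) hXY
      · exact absurd (comm_of_rel _ X Y le_rfl v u h.symm) hXY
      · simp at h; rw [ih v h]

/-- evaluation of binary words in the free group -/
def gw (w : List Bool) : GG := ev (fun b => bif b then gb else ga) w
lemma gw_form (w : List Bool) : ∃ (n : ℕ) (l : List ℤ), gw w = ga ^ (n : ℤ) * pr l := by
  induction w with
  | nil => exact ⟨0, [], by simp [gw]⟩
  | cons b w ih =>
    obtain ⟨n, l, h⟩ := ih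
    simp only [gw] at h
    cases b
    · exact ⟨n + 1, l, by
        simp only [gw, ev_cons, cond_false, h, Nat.cast_add, Nat.cast_one]
        rw [add_comm, zpow_one_add, mul_assoc]⟩
    · exact ⟨0, n :: l, by simp [gw, h, mul_assoc]⟩

lemma gw_inj : ∀ u v : List Bool, gw u = gw v → u = v := by
  have e0 : ∀ b w, gw (b :: w) = (bif b then gb else ga) * gw w := by intro b w; simp [gw]
  have k0 : ∀ b w, gw (b :: w) ≠ 1 := by
    intro b w h
    obtain ⟨n, l, hn⟩ := gw_form w
    cases b
    · rw [e0, hn, cond_false, ← mul_assoc, ← zpow_one_add] at h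
      have := (pr_inj l [] _ 0 (by simpa using h)).1
      omega
    · rw [e0, hn, cond_true] at h
      have := (pr_inj (n :: l) [] 0 0 (by simpa [mul_assoc] using h)).2
      simp at this
  have k1 : ∀ u v, gw (false :: u) ≠ gw (true :: v) := by
    intro u v h
    obtain ⟨n, l, hn⟩ := gw_form u
    obtain ⟨m, k, hm⟩ := gw_form v
    rw [e0, e0, hn, hm, cond_false, cond_true, ← mul_assoc, ← zpow_one_add] at h
    have := (pr_inj l (m :: k) _ 0 (by rw [h]; simp [mul_assoc])).1
    omega
  intro u
  induction u with
  | nil => intro v h; cases v with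
    | nil => rfl
    | cons b v => exact absurd h.symm (k0 b v)
  | cons b u ih =>
    intro v h
    cases v with
    | nil => exact absurd h (k0 b u)
    | cons b' v =>
      cases b <;> cases b'
      · rw [ih v (by rw [e0, e0] at h; exact mul_left_cancel h)]
      · exact absurd h (k1 u v)
      · exact absurd h.symm (k1 v u)
      · rw [ih v (by rw [e0, e0] at h; exact mul_left_cancel h)]

end WE

namespace WE

lemma third : ∀ a b : Fin 3, a ≠ b → ∃ x : Fin 3, x ≠ a ∧ x ≠ b := by decide

lemma comm_all (h : Fin 3 → List ℕ) (hc : ∀ k l, h k ++ h l = h l ++ h k) (w w' : List (Fin 3)) :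
    mApply h w ++ mApply h w' = mApply h w' ++ mApply h w := by
  have h1 : ∀ k w', h k ++ mApply h w' = mApply h w' ++ h k := by
    intro k w'
    induction w' with
    | nil => simp
    | cons x w' ih => rw [mA_cons, ← List.append_assoc, hc k x, List.append_assoc, ih]; simp
  induction w with
  | nil => simp
  | cons x w ih => rw [mA_cons, List.append_assoc, ih, ← List.append_assoc, h1]; simp

lemma thmA_step (n : ℕ)
    (ih : ∀ (h : Fin 3 → List ℕ), (∑ l, (h l).length) ≤ n → (∀ l, h l ≠ []) →
      ¬ (∀ k l, h k ++ h l = h l ++ h k) → ∀ u v : List (Fin 3), u.Perm v → u ≠ v →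
      mApply h u = mApply h v →
      ∃ ψ, RF ψ ∧ ∀ w w', mApply h w = mApply h w' ↔ ev ψ w = ev ψ w')
    (h : Fin 3 → List ℕ) (hn : (∑ l, (h l).length) ≤ n + 1) (hne : ∀ l, h l ≠ [])
    (hnc : ¬ (∀ k l, h k ++ h l = h l ++ h k)) (a b : Fin 3) (hab : a ≠ b) (u v : List (Fin 3))
    (hp : (a :: u).Perm (b :: v)) (heq : mApply h (a :: u) = mApply h (b :: v))
    (hle : (h b).length ≤ (h a).length) :
    ∃ ψ, RF ψ ∧ ∀ w w', mApply h w = mApply h w' ↔ ev ψ w = ev ψ w' := by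
  obtain ⟨x, hxa, hxb⟩ := third a b hab
  have hl := three x a b hxa hxb hab
  have hpre : h b <+: h a := by
    have a1 : h b <+: mApply h (b :: v) := by simp
    have a2 : h a <+: mApply h (b :: v) := by rw [← heq]; simp
    exact List.prefix_of_prefix_length_le a1 a2 hle
  obtain ⟨r, hr⟩ := hpre
  by_cases hr0 : r = []
  · subst hr0
    simp only [List.append_nil] at hr
    have hxb' : h x ++ h b ≠ h b ++ h x := by
      intro hc
      apply hnc
      intro k l
      rcases hl k with rfl | rfl | rfl <;> rcases hl l with rfl | rfl | rfl <;>
        first | rfl | simp only [← hr, hc]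
    let ψ : Fin 3 → GG := fun l => if l = x then ga else gb
    let τ : Fin 3 → Bool := fun l => if l = x then false else true
    have e1 : ∀ w, mApply h w = bw (h x) (h b) (w.map τ) := by
      intro w
      induction w with
      | nil => rfl
      | cons l w ih =>
        rw [mA_cons, ih, List.map_cons, bw_cons]
        rcases hl l with rfl | rfl | rfl
        · simp [τ]
        · simp [τ, hxa.symm, hr]
        · simp [τ, hxb.symm]
    have e2 : ∀ w, ev ψ w = gw (w.map τ) := by
      intro w
      induction w with
      | nil => rfl
      | cons l w ih =>
        rw [ev_cons, ih, List.map_cons, gw, gw, ev_cons]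
        congr 1
        by_cases hlx : l = x <;> simp [ψ, τ, hlx]
    refine ⟨ψ, ⟨x, a, b, 1, 1, hxa, hxb, hab, by simp [ψ], ?_, ?_, one_pos, one_pos, by simp⟩, ?_⟩
    · simpa [ψ, hxa.symm] using Mdeg_b
    · simpa [ψ, hxb.symm] using Mdeg_b
    · intro w w'
      rw [e1, e1, e2, e2]
      exact ⟨fun hh => by rw [bw_inj _ _ hxb' _ _ hh], fun hh => by rw [gw_inj _ _ hh]⟩
  · let h' : Fin 3 → List ℕ := Function.update h a r
    let σ : Fin 3 → List (Fin 3) := fun l => if l = a then [b, a] else [l]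
    have hσ : ∀ l, mApply h' (σ l) = h l := by
      intro l
      by_cases hla : l = a
      · subst hla; simp [σ, h', hab.symm, hr]
      · simp [σ, h', hla]
    have hσw : ∀ w, mApply h' (w.flatMap σ) = mApply h w := by
      intro w; rw [mA_flatMap]; simp only [hσ]
    have hlen : ∑ l, (h' l).length ≤ n := by
      have h1 : ∑ l, (h' l).length < ∑ l, (h l).length := by
        apply Finset.sum_lt_sum
        · intro l _
          by_cases hla : l = a
          · subst hla; simp [h', ← hr]
          · simp [h', hla]
        · refine ⟨a, Finset.mem_univ _, ?_⟩
          have := List.length_pos_iff.2 (hne b)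
          simp only [h', Function.update_self, ← hr, List.length_append]; omega
      omega
    have hv1 : ∀ v : List (Fin 3), ∀ t, v.flatMap σ ≠ a :: t := by
      intro v t ht
      cases v with
      | nil => simp at ht
      | cons l v =>
        by_cases hla : l = a
        · simp [σ, hla, List.flatMap_cons] at ht; exact hab ht.1.symm
        · simp [σ, hla, List.flatMap_cons] at ht
    obtain ⟨ψ', hRF, hiff⟩ := ih h' hlen
      (by intro l; by_cases hla : l = a
          · subst hla; simp [h', hr0]
          · simp [h', hla, hne])
      (by intro hc; apply hnc; intro k l; rw [← hσ, ← hσ l]; exact comm_all h' hc _ _)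
      ((a :: u).flatMap σ) ((b :: v).flatMap σ) (hp.flatMap_right σ)
      (by
        intro hh
        simp only [List.flatMap_cons, σ, if_true, hab.symm, if_false, List.cons_append,
          List.nil_append, List.cons.injEq, true_and] at hh
        exact hv1 v _ hh.symm)
      (by rw [hσw, hσw, heq])
    let ψ : Fin 3 → GG := fun l => ev ψ' (σ l)
    have hψw : ∀ w, ev ψ w = ev ψ' (w.flatMap σ) := fun w => (ev_flatMap ψ' σ w).symm
    have hψiff : ∀ w w', mApply h w = mApply h w' ↔ ev ψ w = ev ψ w' := by
      intro w w'; rw [hψw, hψw, ← hiff, hσw, hσw]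
    have hψa : ψ a = ψ' b * ψ' a := by simp [ψ, σ]
    have hψb : ψ b = ψ' b := by simp [ψ, σ, hab.symm]
    have hψx : ψ x = ψ' x := by simp [ψ, σ, hxa]
    obtain ⟨r', hr', hget⟩ := hRF.get
    rcases hl r' with rfl | rfl | rfl
    · obtain ⟨i, j, h1, h2, h3, h4, h5⟩ := hget a b hxa hxb hab
      refine ⟨ψ, ⟨r', a, b, j + i, j, hxa, hxb, hab, by rw [hψx, hr'], ?_, ?_, by omega, h4, ?_⟩, hψiff⟩
      · rw [hψa]; exact h2.mul h1
      · rw [hψb]; exact h2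
      · simpa using h5
    · obtain ⟨i, j, h1, h2, h3, h4, h5⟩ := hget x b hxa.symm hab hxb
      obtain ⟨θ, hθ, hθRF⟩ := case3 ψ x r' b hxa hxb hab i j h3 h4 h5 (by rw [hψx]; exact h1)
        (by rw [hψb]; exact h2) (by rw [hψa, hψb, hr']) u v hp ((hψiff _ _).1 heq)
      refine ⟨_, hθRF, ?_⟩
      intro w w'
      rw [hψiff, ← ev_hom, ← ev_hom]
      exact hθ.eq_iff.symm
    · obtain ⟨i, j, h1, h2, h3, h4, h5⟩ := hget x a hxb.symm hab.symm hxa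
      refine ⟨ψ, ⟨r', x, a, i, j, hxb.symm, hab.symm, hxa, by rw [hψb, hr'], ?_, ?_, h3, h4, h5⟩, hψiff⟩
      · rw [hψx]; exact h1
      · rw [hψa, hr']; simpa using Mdeg_a'.mul h2

theorem thmA : ∀ (n : ℕ) (h : Fin 3 → List ℕ), (∑ l, (h l).length) ≤ n → (∀ l, h l ≠ []) →
      ¬ (∀ k l, h k ++ h l = h l ++ h k) → ∀ u v : List (Fin 3), u.Perm v → u ≠ v →
      mApply h u = mApply h v →
      ∃ ψ, RF ψ ∧ ∀ w w', mApply h w = mApply h w' ↔ ev ψ w = ev ψ w' := by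
  intro n
  induction n with
  | zero =>
    intro h hn hne
    have := Finset.sum_eq_zero_iff.1 (Nat.le_zero.1 hn) 0 (Finset.mem_univ _)
    exact absurd (List.length_eq_zero_iff.1 this) (hne 0)
  | succ n ih =>
    intro h hn hne hnc u v hp hneq heq
    obtain ⟨w, a, b, u', v', rfl, rfl, hab⟩ := split_ne u v hp.length_eq hneq
    rw [mA_append, mA_append, List.append_cancel_left_eq] at heq
    rw [List.perm_append_left_iff] at hp
    rcases le_total (h b).length (h a).length with hh | hh
    · exact thmA_step n ih h hn hne hnc a b hab u' v' hp heq hh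
    · exact thmA_step n ih h hn hne hnc b a hab.symm v' u' hp.symm heq.symm hh
end WE

namespace WE

/-- the letter type with respect to `p` -/
def gl (p : Fin 3) (l : Fin 3) : Bool := if l = p then false else true

/-- a morphism in role form -/
def Ph (ρ p : Fin 3) (S T : Bool → ℤ) (E : Bool → List ℤ) (l : Fin 3) : GG :=
  if l = ρ then ga else ga ^ S (gl p l) * be (E (gl p l)) * ga ^ T (gl p l)

/-- tokens -/
def tk (ρ p : Fin 3) : List (Fin 3) → ℤ × List (Bool × ℤ)
  | [] => (0, [])
  | l :: w => if l = ρ then ((tk ρ p w).1 + 1, (tk ρ p w).2)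
      else (0, (gl p l, (tk ρ p w).1) :: (tk ρ p w).2)

def jn (S T : Bool → ℤ) (U : List (Bool × ℤ)) : List (Bool × ℤ) :=
  junc (fun x : Bool × ℤ => S x.1) (fun x : Bool × ℤ => T x.1 + x.2) Prod.fst U

lemma jn_fst (S T) (U : List (Bool × ℤ)) : (jn S T U).map Prod.fst = U.map Prod.fst := junc_fst _ _ _ _

lemma tk_ev (ρ p S T E) (w : List (Fin 3)) : ev (Ph ρ p S T E) w =
    ga ^ ((tk ρ p w).1 + hd (fun x : Bool × ℤ => S x.1) (tk ρ p w).2) * pr (XX E (jn S T (tk ρ p w).2)) := by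
  rw [zpow_add, mul_assoc, jn, ← ev_junc]
  induction w with
  | nil => simp [tk]
  | cons l w ih =>
    rw [ev_cons, ih]
    by_cases hl : l = ρ
    · simp only [Ph, tk, hl, if_true]
      rw [add_comm, zpow_one_add, mul_assoc]
    · simp only [Ph, tk, hl, if_false, ev_cons]
      simp only [zpow_add, mul_assoc, zpow_zero, one_mul]

lemma tk_iff (ρ p S T E) (w w' : List (Fin 3)) :
    ev (Ph ρ p S T E) w = ev (Ph ρ p S T E) w' ↔
      (tk ρ p w).1 + hd (fun x : Bool × ℤ => S x.1) (tk ρ p w).2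
        = (tk ρ p w').1 + hd (fun x : Bool × ℤ => S x.1) (tk ρ p w').2 ∧
      XX E (jn S T (tk ρ p w).2) = XX E (jn S T (tk ρ p w').2) := by
  rw [tk_ev, tk_ev]
  exact ⟨fun h => pr_inj _ _ _ _ h, fun h => by rw [h.1, h.2]⟩

lemma tk_fst (ρ p) (w : List (Fin 3)) :
    (tk ρ p w).2.map Prod.fst = (w.filter (fun l => l ≠ ρ)).map (gl p) := by
  induction w with
  | nil => rfl
  | cons l w ih =>
    by_cases hl : l = ρ
    · simp [tk, hl] at ih ⊢; exact ih
    · simp [tk, hl] at ih ⊢; exact ih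

lemma tk_count (ρ p : Fin 3) (h : ρ ≠ p) (w : List (Fin 3)) :
    ((tk ρ p w).2.map Prod.fst).count false = w.count p := by
  rw [tk_fst]
  induction w with
  | nil => rfl
  | cons l w ih =>
    by_cases hl : l = ρ
    · subst hl; simp [h]; simpa using ih
    · by_cases hp : l = p
      · subst hp; simp [hl, gl]; simpa [gl] using ih
      · simp [hl, hp, gl]; simpa [gl] using ih

lemma tk_nonneg (ρ p) (w : List (Fin 3)) : 0 ≤ (tk ρ p w).1 := by
  induction w with
  | nil => simp [tk]
  | cons l w ih => by_cases hl : l = ρ <;> simp [tk, hl]; omega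

lemma tk_perm (ρ p) {w w' : List (Fin 3)} (h : w.Perm w') :
    ((tk ρ p w).2.map Prod.fst).Perm ((tk ρ p w').2.map Prod.fst) := by
  rw [tk_fst, tk_fst]
  exact (h.filter _).map _

lemma gl_inj (ρ p : Fin 3) (h : ρ ≠ p) : ∀ a b : Fin 3, a ≠ ρ → b ≠ ρ → gl p a = gl p b → a = b := by
  revert ρ p; decide

lemma left_lemma (ρ p : Fin 3) (hρp : ρ ≠ p) (u v : List (Fin 3)) (hp : u.Perm v) (hne : u ≠ v) :
    (∀ S T E, ev (Ph ρ p S T E) u ≠ ev (Ph ρ p S T E) v) ∨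
    ∃ (k : ℤ) (c : ℤ) (U : List (Bool × ℤ)) (d : ℤ) (V : List (Bool × ℤ)),
      (((false, c) :: U).map Prod.fst).Perm (((true, d) :: V).map Prod.fst) ∧
      (((false, c) :: U).map Prod.fst).count false ≤ u.count p ∧
      ∀ S T E, ev (Ph ρ p S T E) u = ev (Ph ρ p S T E) v →
        S true - S false = k ∧ XX E (jn S T ((false, c) :: U)) = XX E (jn S T ((true, d) :: V)) := by
  by_cases hno : (∀ S T E, ev (Ph ρ p S T E) u ≠ ev (Ph ρ p S T E) v)
  · exact Or.inl hno
  right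
  push Not at hno
  obtain ⟨S0, T0, E0, h0⟩ := hno
  obtain ⟨w, a, b, u', v', rfl, rfl, hab⟩ := split_ne u v hp.length_eq hne
  rw [List.perm_append_left_iff] at hp
  have hcan : ∀ S T E, ev (Ph ρ p S T E) (w ++ a :: u') = ev (Ph ρ p S T E) (w ++ b :: v') ↔
    ev (Ph ρ p S T E) (a :: u') = ev (Ph ρ p S T E) (b :: v') := by
    intro S T E
    rw [ev_append, ev_append]
    exact ⟨mul_left_cancel, fun h => by rw [h]⟩
  simp only [hcan] at h0 ⊢
  have hcnt : (a :: u').count p ≤ (w ++ a :: u').count p := by simp [List.count_append]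
  have hcnt' : (b :: v').count p ≤ (w ++ a :: u').count p := by
    rw [← hp.count_eq]; exact hcnt
  have hPa := tk_perm ρ p hp
  have hca := tk_count ρ p hρp (a :: u')
  have hcb := tk_count ρ p hρp (b :: v')
  rw [tk_iff] at h0
  simp only [tk_iff]
  have hlead : ∀ g c U d V, (tk ρ p (a :: u')).2 = (g, c) :: U → (tk ρ p (b :: v')).2 = (g, d) :: V →
      False := by
    intro g c U d V h1 h2
    rw [h1, h2] at h0
    have h3 := h0.1
    simp only [hd_cons, add_left_inj] at h3
    by_cases ha : a = ρ <;> by_cases hb : b = ρ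
    · exact hab (ha.trans hb.symm)
    · have := tk_nonneg ρ p u'
      simp [tk, ha, hb] at h3; omega
    · have := tk_nonneg ρ p v'
      simp [tk, ha, hb] at h3; omega
    · simp [tk, ha] at h1
      simp [tk, hb] at h2
      exact hab (gl_inj ρ p hρp a b ha hb (by rw [h1.1.1, h2.1.1]))
  have hna : (tk ρ p (a :: u')).2 = [] → a = ρ := by
    intro h; by_contra ha; simp [tk, ha] at h
  have hnb : (tk ρ p (b :: v')).2 = [] → b = ρ := by
    intro h; by_contra ha; simp [tk, ha] at h
  generalize (tk ρ p (a :: u')).2 = U0 at *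
  generalize (tk ρ p (b :: v')).2 = V0 at *
  generalize (tk ρ p (a :: u')).1 = m at *
  generalize (tk ρ p (b :: v')).1 = n at *
  cases hU : U0 with
  | nil =>
    exfalso
    have hV : V0 = [] := by
      have := hPa.length_eq
      rw [hU] at this
      simp only [List.map_nil, List.length_nil, List.length_map] at this
      exact List.length_eq_zero_iff.1 this.symm
    exact hab ((hna hU).trans (hnb hV).symm)
  | cons x U =>
  cases hV : V0 with
  | nil => have := hPa.length_eq; simp [hU, hV] at this
  | cons y V =>
  obtain ⟨g, c⟩ := x
  obtain ⟨g', d⟩ := y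
  subst hU hV
  cases g <;> cases g'
  · exact (hlead false c U d V rfl rfl).elim
  · refine ⟨m - n, c, U, d, V, hPa, by rw [hca]; exact hcnt, ?_⟩
    rintro S T E ⟨h1, h2⟩
    refine ⟨?_, h2⟩
    simp at h1; omega
  · refine ⟨n - m, d, V, c, U, hPa.symm, by rw [hcb]; exact hcnt', ?_⟩
    rintro S T E ⟨h1, h2⟩
    refine ⟨?_, h2.symm⟩
    simp at h1; omega
  · exact (hlead true c U d V rfl rfl).elim

lemma Ph_rv (ρ p S T E) (l : Fin 3) : rv (Ph ρ p S T E l) = Ph ρ p T S (fun b => (E b).reverse) l := by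
  by_cases hl : l = ρ
  · simp [Ph, hl]
  · simp [Ph, hl, rv_mul, rv_be, mul_assoc]

lemma Ph_rev (ρ p S T E) (u v : List (Fin 3)) (h : ev (Ph ρ p S T E) u = ev (Ph ρ p S T E) v) :
    ev (Ph ρ p T S (fun b => (E b).reverse)) u.reverse
      = ev (Ph ρ p T S (fun b => (E b).reverse)) v.reverse := by
  have : Ph ρ p T S (fun b => (E b).reverse) = fun l => rv (Ph ρ p S T E l) := by
    funext l; rw [Ph_rv]
  rw [this, ev_rv, ev_rv, h]

/-- normalized parameters -/
def nz (s : ℤ) : Bool → ℤ := fun b => bif b then s else 0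
@[simp] lemma nz_false (s) : nz s false = 0 := rfl
@[simp] lemma nz_true (s) : nz s true = s := rfl

lemma side_lemma' (ρ p : Fin 3) (hρp : ρ ≠ p) (u v : List (Fin 3)) (hp : u.Perm v) (hne : u ≠ v)
    (μ : ℕ) (hμ : 1 ≤ μ) (hμp : u.count p ≤ μ) :
    ∃ (s0 t0 c0 : ℤ) (C : List ℤ), C.length + 1 ≤ μ ∧
      ∀ s t e f, e.length ≤ f.length → Nat.Coprime (e.length + 1) (f.length + 1) →
        ev (Ph ρ p (nz s) (nz t) (EE e f)) u = ev (Ph ρ p (nz s) (nz t) (EE e f)) v →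
        s = s0 ∧ t = t0 ∧ ((e = [] ∧ f <+: (c0 :: C) ++ f) ∨
          (e ≠ [] ∧ e = List.replicate e.length c0 ∧ f = List.replicate f.length c0)) := by
  rcases left_lemma ρ p hρp u v hp hne with hno | ⟨s0, c, U, d, V, hP, hcnt, hL⟩
  · exact ⟨0, 0, 0, [], by simpa using hμ, fun s t e f _ _ h => absurd h (hno _ _ _)⟩
  rcases left_lemma ρ p hρp u.reverse v.reverse
    ((List.reverse_perm u).trans (hp.trans (List.reverse_perm v).symm)) (by simpa using hne) with
    hno | ⟨t0, c', U', d', V', hP', -, hR⟩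
  · exact ⟨0, 0, 0, [], by simpa using hμ, fun s t e f _ _ h => absurd (Ph_rev _ _ _ _ _ _ _ h) (hno _ _ _)⟩
  have hjn : ∀ (S T : Bool → ℤ) (g : Bool) (c : ℤ) (U : List (Bool × ℤ)), jn S T ((g, c) :: U) =
    (g, T g + c + hd (fun x : Bool × ℤ => S x.1) U) :: jn S T U := by intros; rfl
  set c0 := nz t0 false + c + hd (fun x : Bool × ℤ => nz s0 x.1) U with hc0
  refine ⟨s0, t0, c0, run (jn (nz s0) (nz t0) U), ?_, ?_⟩
  · have h1 := run_length (jn (nz s0) (nz t0) U)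
    rw [jn_fst] at h1
    simp only [List.map_cons, List.count_cons_self] at hcnt
    omega
  intro s t e f hle hco h
  have hL1 := hL _ _ _ h
  have hR1 := hR _ _ _ (Ph_rev _ _ _ _ _ _ _ h)
  have hs : s = s0 := by simpa using hL1.1
  have ht : t = t0 := by simpa using hR1.1
  subst hs ht
  refine ⟨rfl, rfl, ?_⟩
  have hLW : LW (EE e f) c0 (jn (nz s) (nz t) U)
      (nz t true + d + hd (fun x : Bool × ℤ => nz s x.1) V) (jn (nz s) (nz t) V) := by
    constructor
    · have := hL1.2; rw [hjn, hjn] at this; exact this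
    · have := hP; rw [← jn_fst (nz s) (nz t), ← jn_fst (nz s) (nz t) ((true, d) :: V)] at this
      exact this
  have hRW : Leq (EE e.reverse f.reverse) := by
    have hE : (fun b => (EE e f b).reverse) = EE e.reverse f.reverse := by
      funext b; cases b <;> rfl
    rw [hE] at hR1
    refine ⟨nz s false + c' + hd (fun x : Bool × ℤ => nz t x.1) U', jn (nz t) (nz s) U',
      nz s true + d' + hd (fun x : Bool × ℤ => nz t x.1) V', jn (nz t) (nz s) V', ?_, ?_⟩
    · have := hR1.2; rw [hjn, hjn] at this; exact this
    · have := hP'; rw [← jn_fst (nz t) (nz s), ← jn_fst (nz t) (nz s) ((true, d') :: V')] at this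
      exact this
  by_cases he : e = []
  · left
    subst he
    exact ⟨rfl, by simpa [run] using hLW.deg1⟩
  · right
    have hf : f ≠ [] := by
      rintro rfl; simp at hle; exact he hle
    obtain ⟨x, h1, h2⟩ := euclid _ e f le_rfl he hf hco ⟨_, _, _, _, hLW⟩ hRW
    have h3 := hLW
    rw [h1, h2] at h3
    have := first_junc _ x e.length f.length le_rfl (by simpa using he) (by simpa using hf) hco _ _ _ _ h3
    rw [this.1]; exact ⟨he, h1, h2⟩

lemma side_lemma (ρ p : Fin 3) (hρp : ρ ≠ p) (u v : List (Fin 3)) (hp : u.Perm v) (hne : u ≠ v)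
    (μ : ℕ) (hμ : 1 ≤ μ) (hμp : u.count p ≤ μ) :
    ∃ (s0 t0 c0 : ℤ) (C : List ℤ), C.length + 1 ≤ μ ∧
      ∀ s t e f, e.length ≤ f.length → Nat.Coprime (e.length + 1) (f.length + 1) →
        ev (Ph ρ p (nz s) (nz t) (EE e f)) u = ev (Ph ρ p (nz s) (nz t) (EE e f)) v →
        s = s0 ∧ t = t0 ∧ ((e = [] ∧ f <+: (c0 :: C) ++ f) ∨
          (e = List.replicate e.length c0 ∧ f = List.replicate f.length c0)) := by
  obtain ⟨s0, t0, c0, C, h1, h2⟩ := side_lemma' ρ p hρp u v hp hne μ hμ hμp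
  refine ⟨s0, t0, c0, C, h1, fun s t e f a b c => ?_⟩
  obtain ⟨h3, h4, h5⟩ := h2 s t e f a b c
  exact ⟨h3, h4, h5.imp id (fun h => h.2)⟩

end WE

namespace WE

/-! ### the family of powers of a fixed period -/

def seg (st : ℕ → ℤ) (a n : ℕ) : List ℤ := (List.range n).map (fun i => st (a + i))

@[simp] lemma seg_zero (st a) : seg st a 0 = [] := rfl
@[simp] lemma seg_length (st a n) : (seg st a n).length = n := by simp [seg]
lemma seg_add (st : ℕ → ℤ) (a n n' : ℕ) : seg st a (n + n') = seg st a n ++ seg st (a + n) n' := by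
  simp [seg, List.range_add, add_assoc]
lemma seg_one (st : ℕ → ℤ) (a : ℕ) : seg st a 1 = [st a] := by simp [seg]
lemma seg_congr (st : ℕ → ℤ) (a a' n : ℕ) (h : ∀ i < n, st (a + i) = st (a' + i)) :
    seg st a n = seg st a' n := by
  simp only [seg]
  apply List.map_congr_left
  intro i hi
  exact h i (List.mem_range.1 hi)
lemma seg_get (st : ℕ → ℤ) (a n i : ℕ) (h : i < n) : (seg st a n)[i]? = some (st (a + i)) := by
  simp [seg, h]

lemma per (st : ℕ → ℤ) (m : ℕ) (hst : ∀ n, st (n + m) = st n) (n k : ℕ) : st (n + m * k) = st n := by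
  induction k with
  | zero => simp
  | succ k ih => rw [Nat.mul_succ, ← add_assoc, hst, ih]

lemma dev_eq (st : ℕ → ℤ) (n n' : ℕ) (z z' : ℤ) (l l' : List ℤ) (hz : z ≠ st n) (hz' : z' ≠ st n')
    (h : seg st 0 n ++ z :: l = seg st 0 n' ++ z' :: l') : n = n' := by
  have key : ∀ (n n' : ℕ) (z z' : ℤ) (l l' : List ℤ), z ≠ st n → n < n' →
    seg st 0 n ++ z :: l = seg st 0 n' ++ z' :: l' → False := by
    intro n n' z z' l l' hz hlt h
    have := congrArg (fun l => l[n]?) h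
    beta_reduce at this
    rw [List.getElem?_append_right (by simp), List.getElem?_append_left (by simpa using hlt),
      seg_get _ _ _ _ hlt] at this
    simp at this
    exact hz this
  rcases lt_trichotomy n n' with hh | hh | hh
  · exact (key _ _ _ _ _ _ hz hh h).elim
  · exact hh
  · exact (key _ _ _ _ _ _ hz' hh h.symm).elim

lemma dev_no (st : ℕ → ℤ) (n n' : ℕ) (z' : ℤ) (l' : List ℤ) (hz' : z' ≠ st n')
    (h : seg st 0 n = seg st 0 n' ++ z' :: l') : False := by
  have hl := congrArg List.length h
  simp at hl
  have := congrArg (fun l => l[n']?) h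
  beta_reduce at this
  rw [List.getElem?_append_right (by simp), seg_get _ _ _ _ (by omega)] at this
  simp at this
  exact hz' this.symm

def evk (st : ℕ → ℤ) (m k : ℕ) (w : List (Option ℤ)) : List ℤ :=
  w.flatMap (fun x => match x with | none => seg st 0 (m * k) | some d => [d])
@[simp] lemma evk_nil (st m k) : evk st m k [] = [] := rfl
@[simp] lemma evk_none (st m k w) : evk st m k (none :: w) = seg st 0 (m * k) ++ evk st m k w := by
  simp [evk]
@[simp] lemma evk_some (st m k d w) : evk st m k (some d :: w) = d :: evk st m k w := by
  simp [evk]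
lemma evk_append (st m k w w') : evk st m k (w ++ w') = evk st m k w ++ evk st m k w' := by
  simp [evk]
lemma evk_const (st m k) (l : List ℤ) : evk st m k (l.map some) = l := by
  induction l with
  | nil => rfl
  | cons x l ih => simp [ih]

lemma split_stream (st : ℕ → ℤ) (m : ℕ) (hm : 0 < m) (hst : ∀ n, st (n + m) = st n)
    (u : List (Option ℤ)) : ∀ a : ℕ, ∃ u1 u2 A B, u = u1 ++ u2 ∧
      (∀ k, evk st m k u1 = seg st a (A + m * (B * k))) ∧
      (u2 = [] ∨ ∃ δ z, z ≠ st (a + A + δ) ∧ ∀ k, 1 ≤ k → ∃ l, evk st m k u2 = seg st (a + A) δ ++ z :: l) := by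
  induction u with
  | nil => intro a; exact ⟨[], [], 0, 0, rfl, by simp, Or.inl rfl⟩
  | cons x u ih =>
    intro a
    cases x with
    | some d =>
      by_cases hd : d = st a
      · obtain ⟨u1, u2, A, B, rfl, h1, h2⟩ := ih (a + 1)
        refine ⟨some d :: u1, u2, 1 + A, B, rfl, ?_, ?_⟩
        · intro k
          rw [evk_some, h1, add_assoc, seg_add st a 1, seg_one, hd]; rfl
        · rw [← add_assoc]; exact h2
      · exact ⟨[], some d :: u, 0, 0, rfl, by simp, Or.inr ⟨0, d, by simpa using hd,
          fun k _ => ⟨evk st m k u, by simp⟩⟩⟩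
    | none =>
      by_cases hd : ∀ i < m, st (0 + i) = st (a + i)
      · have hall : ∀ i, st (0 + i) = st (a + i) := by
          intro i
          have := hd (i % m) (Nat.mod_lt _ hm)
          rw [← per st m hst _ (i / m), ← per st m hst (a + _) (i / m), add_assoc, add_assoc,
            Nat.mod_add_div] at this
          exact this
        obtain ⟨u1, u2, A, B, rfl, h1, h2⟩ := ih a
        refine ⟨none :: u1, u2, A, B + 1, rfl, ?_, h2⟩
        intro k
        rw [evk_none, h1, show A + m * ((B + 1) * k) = m * k + (A + m * (B * k)) by ring, seg_add st _ (m * k),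
          seg_congr st 0 a (m * k) (fun i _ => hall i)]
        congr 1
        apply seg_congr
        intro i _
        rw [show a + m * k + i = a + i + m * k by ring, per st m hst]
      · push Not at hd
        have hex : ∃ i, i < m ∧ st (0 + i) ≠ st (a + i) := hd
        classical
        let δ := Nat.find hex
        have hδ := Nat.find_spec hex
        have hmin : ∀ i < δ, st (0 + i) = st (a + i) := by
          intro i hi
          by_contra hne
          exact Nat.find_min hex hi ⟨lt_trans hi hδ.1, hne⟩
        refine ⟨[], none :: u, 0, 0, rfl, by simp, Or.inr ⟨δ, st (0 + δ), hδ.2, ?_⟩⟩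
        intro k hk
        have hlt : δ < m := hδ.1
        have : δ + 1 ≤ m * k := le_trans hlt (Nat.le_mul_of_pos_right m hk)
        obtain ⟨R, hR⟩ := Nat.exists_eq_add_of_le this
        refine ⟨seg st (δ + 1) R ++ evk st m k u, ?_⟩
        rw [evk_none, hR, seg_add, seg_add, seg_one, seg_congr st 0 (a + 0) δ (by simpa using hmin)]
        simp

lemma lin2 (x y x' y' k1 k2 m : ℕ) (hm : 0 < m) (hk : k1 ≠ k2)
    (h1 : x + m * (y * k1) = x' + m * (y' * k1)) (h2 : x + m * (y * k2) = x' + m * (y' * k2)) :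
    x = x' ∧ y = y' := by
  have hy : y = y' := by
    zify at *
    have h3 : (m : ℤ) * ((y - y') * (k1 - k2)) = 0 := by linear_combination h1 - h2
    have hk' : (k1 : ℤ) - k2 ≠ 0 := sub_ne_zero.2 hk
    have hm' : (m : ℤ) ≠ 0 := by omega
    rcases mul_eq_zero.1 h3 with h | h
    · exact absurd h hm'
    · rcases mul_eq_zero.1 h with h | h
      · linarith
      · exact absurd h hk'
  subst hy
  exact ⟨by omega, rfl⟩

lemma famF_sym (st : ℕ → ℤ) (m : ℕ) (hm : 0 < m) (hst : ∀ n, st (n + m) = st n) (k1 k2 : ℕ)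
    (hk1 : 1 ≤ k1) (hk2 : 1 ≤ k2) (hk : k1 ≠ k2) : ∀ (n : ℕ) (u v : List (Option ℤ)),
    (evk st m k1 u).length ≤ n → evk st m k1 u = evk st m k1 v → evk st m k2 u = evk st m k2 v →
    ∀ k, 1 ≤ k → evk st m k u = evk st m k v := by
  have hpos : ∀ k, 1 ≤ k → 0 < m * k := fun k hk => Nat.mul_pos hm hk
  intro n
  induction n with
  | zero =>
    intro u v hn h1 h2
    have e0 : ∀ w : List (Option ℤ), (evk st m k1 w).length ≤ 0 → w = [] := by
      intro w hw
      cases w with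
      | nil => rfl
      | cons x w => cases x with
        | none => have := hpos k1 hk1; simp at hw; omega
        | some d => simp at hw
    rw [e0 u hn, e0 v (by rw [← h1]; exact hn)]
    intros; rfl
  | succ n ih =>
    -- the offset step
    have step : ∀ u1 u2 v1 v2 : List (Option ℤ), ∀ A A' B, A ≤ A' → 1 ≤ B →
        (evk st m k1 (u1 ++ u2)).length ≤ n + 1 →
        (∀ k, evk st m k u1 = seg st 0 (A + m * (B * k))) →
        (∀ k, evk st m k v1 = seg st 0 (A' + m * (B * k))) →
        evk st m k1 (u1 ++ u2) = evk st m k1 (v1 ++ v2) →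
        evk st m k2 (u1 ++ u2) = evk st m k2 (v1 ++ v2) →
        ∀ k, 1 ≤ k → evk st m k (u1 ++ u2) = evk st m k (v1 ++ v2) := by
      intro u1 u2 v1 v2 A A' B hA hB hn hu hv h1 h2
      obtain ⟨R, rfl⟩ := Nat.exists_eq_add_of_le hA
      have hv' : ∀ k, evk st m k v1 = evk st m k u1 ++ seg st A R := by
        intro k
        rw [hv, hu, show A + R + m * (B * k) = (A + m * (B * k)) + R by ring, seg_add st _ (A + m * (B * k))]
        congr 1
        apply seg_congr
        intro i _
        rw [show 0 + (A + m * (B * k)) + i = A + i + m * (B * k) by ring, per st m hst]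
      have heq : ∀ k, evk st m k (u1 ++ u2) = evk st m k (v1 ++ v2) ↔
          evk st m k u2 = evk st m k ((seg st A R).map some ++ v2) := by
        intro k
        rw [evk_append, evk_append, hv', evk_append, evk_const, List.append_assoc,
          List.append_cancel_left_eq]
      rw [heq] at h1 h2
      intro k hk
      rw [heq]
      refine ih u2 _ ?_ h1 h2 k hk
      have : 0 < m * (B * k1) := Nat.mul_pos hm (Nat.mul_pos hB hk1)
      rw [evk_append, List.length_append, hu, seg_length] at hn
      omega
    have main : ∀ (u : List (Option ℤ)) (d : ℤ) (v : List (Option ℤ)),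
        (evk st m k1 (none :: u)).length ≤ n + 1 →
        evk st m k1 (none :: u) = evk st m k1 (some d :: v) →
        evk st m k2 (none :: u) = evk st m k2 (some d :: v) →
        ∀ k, 1 ≤ k → evk st m k (none :: u) = evk st m k (some d :: v) := by
      intro u d v hn h1 h2
      obtain ⟨u1, u2, A, B, rfl, hu, hu2⟩ := split_stream st m hm hst u 0
      obtain ⟨v1, v2, A', B', hvv, hv, hv2⟩ := split_stream st m hm hst (some d :: v) 0
      have hu' : ∀ k, evk st m k (none :: u1) = seg st 0 (A + m * ((B + 1) * k)) := by
        intro k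
        rw [evk_none, hu, show A + m * ((B + 1) * k) = m * k + (A + m * (B * k)) by ring, seg_add st _ (m * k)]
        congr 1
        apply seg_congr
        intro i _
        rw [show 0 + m * k + i = 0 + i + m * k by ring, per st m hst]
      rw [hvv] at h1 h2 ⊢
      rw [← List.cons_append] at h1 h2 hn ⊢
      have hsh : ∀ N k δ, seg st (0 + N) δ = seg st (0 + (N + m * k)) δ := by
        intro N k δ
        apply seg_congr
        intro i _
        rw [show 0 + (N + m * k) + i = 0 + N + i + m * k by ring, per st m hst]
      rcases hu2 with rfl | ⟨δ, z, hz, hu2⟩ <;> rcases hv2 with rfl | ⟨δ', z', hz', hv2⟩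
      · have e1 := congrArg List.length h1
        have e2 := congrArg List.length h2
        simp only [List.append_nil, hu', hv, seg_length] at e1 e2
        obtain ⟨rfl, rfl⟩ := lin2 _ _ _ _ _ _ _ hm hk e1 e2
        intro k _
        simp only [List.append_nil, hu', hv]
      · exfalso
        obtain ⟨l, hl⟩ := hv2 k1 hk1
        rw [List.append_nil, hu', evk_append, hv, hl, hsh A' (B' * k1), ← List.append_assoc, ← seg_add] at h1
        refine dev_no st _ _ z' l ?_ h1
        rw [show A' + m * (B' * k1) + δ' = 0 + A' + δ' + m * (B' * k1) by ring, per st m hst]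
        exact hz'
      · exfalso
        obtain ⟨l, hl⟩ := hu2 k1 hk1
        rw [List.append_nil, hv, evk_append, hu', hl, hsh A ((B + 1) * k1), ← List.append_assoc, ← seg_add] at h1
        refine dev_no st _ _ z l ?_ h1.symm
        rw [show A + m * ((B + 1) * k1) + δ = 0 + A + δ + m * ((B + 1) * k1) by ring, per st m hst]
        exact hz
      · have hpos2 : ∀ k, 1 ≤ k → evk st m k (none :: u1 ++ u2) = evk st m k (v1 ++ v2) →
            (A + δ) + m * ((B + 1) * k) = (A' + δ') + m * (B' * k) := by
          intro k hk h
          obtain ⟨l, hl⟩ := hu2 k hk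
          obtain ⟨l', hl'⟩ := hv2 k hk
          rw [evk_append, evk_append, hu', hv, hl, hl', hsh A ((B + 1) * k), hsh A' (B' * k),
            ← List.append_assoc, ← List.append_assoc, ← seg_add, ← seg_add] at h
          have := dev_eq st _ _ z z' l l' ?_ ?_ h
          · omega
          · rw [show A + m * ((B + 1) * k) + δ = 0 + A + δ + m * ((B + 1) * k) by ring, per st m hst]
            exact hz
          · rw [show A' + m * (B' * k) + δ' = 0 + A' + δ' + m * (B' * k) by ring, per st m hst]
            exact hz'
        obtain ⟨-, hB⟩ := lin2 _ _ _ _ _ _ _ hm hk (hpos2 k1 hk1 h1) (hpos2 k2 hk2 h2)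
        subst hB
        rcases le_total A A' with hA | hA
        · exact step _ _ _ _ A A' (B + 1) hA (by omega) hn hu' hv h1 h2
        · intro k hk
          exact (step _ _ _ _ A' A (B + 1) hA (by omega) (by rw [← h1]; exact hn) hv hu' h1.symm h2.symm k hk).symm
    intro u v hn h1 h2 k hk
    cases u with
    | nil =>
      cases v with
      | nil => rfl
      | cons y v => cases y with
        | none => have := hpos k1 hk1; have := congrArg List.length h1; simp at this; omega
        | some d => simp at h1
    | cons x u =>
    cases v with
    | nil => cases x with
        | none => have := hpos k1 hk1; have := congrArg List.length h1; simp at this; omega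
        | some d => simp at h1
    | cons y v =>
    cases x with
    | none =>
      cases y with
      | none =>
        simp only [evk_none, List.append_cancel_left_eq] at h1 h2 ⊢
        have := hpos k1 hk1
        simp only [evk_none, List.length_append, seg_length] at hn
        exact ih u v (by omega) h1 h2 k hk
      | some d => exact main u d v hn h1 h2 k hk
    | some d =>
      cases y with
      | none => exact (main v d u (by rw [← h1]; exact hn) h1.symm h2.symm k hk).symm
      | some d' =>
        simp only [evk_some, List.cons.injEq] at h1 h2 ⊢
        simp only [evk_some, List.length_cons] at hn
        exact ⟨h1.1, ih u v (by omega) h1.2 h2.2 k hk⟩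
end WE

namespace WE

def strm (C : List ℤ) (n : ℕ) : ℤ := C.getD (n % C.length) 0

lemma strm_per (C : List ℤ) (n : ℕ) : strm C (n + C.length) = strm C n := by simp [strm]

lemma per_eq (C f : List ℤ) (hC : C ≠ []) (h : f <+: C ++ f) : f = seg (strm C) 0 f.length := by
  have hpos : 0 < C.length := List.length_pos_iff.2 hC
  have key : ∀ n : ℕ, n < f.length → f[n]? = some (strm C n) := by
    intro n
    induction n using Nat.strong_induction_on with
    | _ n ih =>
      intro hlt
      have h2 : (C ++ f)[n]? = f[n]? := by
        obtain ⟨R, hR⟩ := h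
        rw [← hR, List.getElem?_append_left hlt]
      rw [← h2, List.getElem?_append]
      split_ifs with h3
      · simp [strm, Nat.mod_eq_of_lt h3, h3]
      · rw [ih _ (by omega) (by omega), ← strm_per C (n - C.length), Nat.sub_add_cancel (by omega)]
  apply List.ext_getElem?
  intro n
  by_cases hn : n < f.length
  · rw [key n hn, seg_get _ _ _ _ hn, zero_add]
  · rw [List.getElem?_eq_none (by omega), List.getElem?_eq_none (by simp; omega)]

def symb (C : List ℤ) (r : ℕ) (U : List (Bool × ℤ)) : List (Option ℤ) :=
  U.flatMap (fun x => (bif x.1 then none :: (seg (strm C) 0 r).map some else []) ++ [some x.2])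

lemma symb_cons (C : List ℤ) (r : ℕ) (x : Bool × ℤ) (U : List (Bool × ℤ)) : symb C r (x :: U) =
    (bif x.1 then none :: (seg (strm C) 0 r).map some else []) ++ [some x.2] ++ symb C r U := rfl

lemma XX_symb (C f : List ℤ) (hC : C ≠ []) (h : f <+: C ++ f) (U : List (Bool × ℤ)) :
    XX (EE [] f) U = evk (strm C) C.length (f.length / C.length) (symb C (f.length % C.length) U) := by
  have hf : f = seg (strm C) 0 (C.length * (f.length / C.length)) ++
      seg (strm C) 0 (f.length % C.length) := by
    conv_lhs => rw [per_eq C f hC h, ← Nat.div_add_mod f.length C.length, seg_add]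
    congr 1
    apply seg_congr
    intro i _
    rw [show 0 + C.length * (f.length / C.length) + i = 0 + i + C.length * (f.length / C.length) by ring,
      per _ _ (strm_per C)]
  generalize f.length / C.length = k at *
  generalize f.length % C.length = r at *
  induction U with
  | nil => rfl
  | cons x U ih =>
    obtain ⟨b, d⟩ := x
    rw [XX_cons, ih, symb_cons]
    cases b
    · simp
    · simp only [EE_true, cond_true, List.cons_append, evk_none, List.append_assoc, evk_append,
        evk_const, List.nil_append, evk_some]
      rw [← List.append_assoc, ← hf]

lemma famF (C f1 f2 f3 : List ℤ) (hC : C ≠ []) (h1 : f1 <+: C ++ f1) (h2 : f2 <+: C ++ f2)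
    (h3 : f3 <+: C ++ f3) (l1 : C.length ≤ f1.length) (l2 : C.length ≤ f2.length)
    (l3 : C.length ≤ f3.length) (m2 : f1.length % C.length = f2.length % C.length)
    (m3 : f1.length % C.length = f3.length % C.length) (hne : f2.length ≠ f3.length)
    (U V : List (Bool × ℤ)) (e2 : XX (EE [] f2) U = XX (EE [] f2) V)
    (e3 : XX (EE [] f3) U = XX (EE [] f3) V) : XX (EE [] f1) U = XX (EE [] f1) V := by
  have hpos : 0 < C.length := List.length_pos_iff.2 hC
  rw [XX_symb C _ hC h2, XX_symb C _ hC h2, ← m2] at e2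
  rw [XX_symb C _ hC h3, XX_symb C _ hC h3, ← m3] at e3
  rw [XX_symb C _ hC h1, XX_symb C _ hC h1]
  refine famF_sym (strm C) C.length hpos (strm_per C) _ _ (Nat.div_pos l2 hpos) (Nat.div_pos l3 hpos)
    ?_ _ _ _ le_rfl e2 e3 _ (Nat.div_pos l1 hpos)
  intro hh
  apply hne
  rw [← Nat.div_add_mod f2.length C.length, ← Nat.div_add_mod f3.length C.length, hh, ← m2, m3]

/-! ### the commuting family -/

/-- normal form -/
def nf (c : ℤ) : ℕ → ℕ → List (Bool × ℤ) → List ((ℕ × ℕ) × ℤ) × (ℕ × ℕ)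
  | A, B, [] => ([], (A, B))
  | A, B, (g, d) :: U =>
    let A' := bif g then A else A + 1
    let B' := bif g then B + 1 else B
    if d = c then nf c A' B' U
    else (((A', B'), d) :: (nf c 0 0 U).1, (nf c 0 0 U).2)

def ex (c : ℤ) (i j : ℕ) : List ((ℕ × ℕ) × ℤ) → (ℕ × ℕ) → List ℤ
  | [], F => List.replicate (F.1 * i + F.2 * j) c
  | x :: N, F => List.replicate (x.1.1 * i + x.1.2 * j - 1) c ++ x.2 :: ex c i j N F

lemma nf_good (c : ℤ) (U : List (Bool × ℤ)) : ∀ A B, ∀ x ∈ (nf c A B U).1, x.2 ≠ c ∧ 0 < x.1.1 + x.1.2 := by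
  induction U with
  | nil => intro A B x hx; simp [nf] at hx
  | cons y U ih =>
    intro A B x hx
    obtain ⟨g, d⟩ := y
    by_cases hd : d = c
    · simp only [nf, hd, if_true] at hx
      exact ih _ _ x hx
    · simp only [nf, hd, if_false, List.mem_cons] at hx
      rcases hx with rfl | hx
      · refine ⟨hd, ?_⟩
        cases g <;> simp
      · exact ih _ _ x hx

lemma nf_ex (c : ℤ) (a b : ℕ) (U : List (Bool × ℤ)) : ∀ A B,
    List.replicate (A * (a + 1) + B * (b + 1)) c ++ XX (EE (List.replicate a c) (List.replicate b c)) U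
      = ex c (a + 1) (b + 1) (nf c A B U).1 (nf c A B U).2 := by
  induction U with
  | nil => intro A B; simp [nf, ex]
  | cons y U ih =>
    intro A B
    obtain ⟨g, d⟩ := y
    have hrep : ∀ x y : ℕ, List.replicate x c ++ List.replicate y c = List.replicate (x + y) c := by
      intro x y; exact List.replicate_append_replicate
    by_cases hd : d = c
    · subst hd
      simp only [nf, if_true]
      rw [← ih, XX_cons]
      have h1 : ∀ l : List ℤ, d :: l = List.replicate 1 d ++ l := fun l => rfl
      cases g
      · simp only [EE_false, cond_false]
        rw [h1, ← List.append_assoc, ← List.append_assoc, hrep, hrep]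
        congr 2; ring
      · simp only [EE_true, cond_true]
        rw [h1, ← List.append_assoc, ← List.append_assoc, hrep, hrep]
        congr 2; ring
    · simp only [nf, hd, if_false, ex]
      rw [← ih, XX_cons, ← List.append_assoc]
      cases g
      · simp only [EE_false, cond_false, hrep, Nat.zero_mul, List.replicate_zero, List.nil_append]
        congr 2
        rw [Nat.add_mul]; omega
      · simp only [EE_true, cond_true, hrep, Nat.zero_mul, List.replicate_zero, List.nil_append]
        congr 2
        rw [Nat.add_mul]; omega

lemma rep_cons_inj (c : ℤ) : ∀ (n n' : ℕ) (d d' : ℤ) (l l' : List ℤ), d ≠ c → d' ≠ c →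
    List.replicate n c ++ d :: l = List.replicate n' c ++ d' :: l' → n = n' ∧ d = d' ∧ l = l' := by
  intro n
  induction n with
  | zero =>
    intro n' d d' l l' hd hd' h
    cases n' with
    | zero => simpa using h
    | succ n' => simp [List.replicate_succ] at h; exact absurd h.1 hd
  | succ n ih =>
    intro n' d d' l l' hd hd' h
    cases n' with
    | zero => simp [List.replicate_succ] at h; exact absurd h.1.symm hd'
    | succ n' =>
      simp only [List.replicate_succ, List.cons_append, List.cons.injEq, true_and] at h
      have := ih n' d d' l l' hd hd' h
      exact ⟨by omega, this.2⟩

lemma coprime_lin (i j i' j' : ℕ) (hi : 0 < i) (hj : 0 < j) (hi' : 0 < i') (hj' : 0 < j')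
    (h1 : Nat.Coprime i j) (h2 : Nat.Coprime i' j')
    (h : i * j' = i' * j) : i = i' ∧ j = j' := by
  have a1 : i ∣ i' := h1.dvd_of_dvd_mul_right ⟨j', h.symm⟩
  have a2 : i' ∣ i := h2.dvd_of_dvd_mul_right ⟨j, h⟩
  have := Nat.dvd_antisymm a1 a2
  subst this
  exact ⟨rfl, (Nat.eq_of_mul_eq_mul_left hi h).symm⟩

lemma lin_pair (i j i' j' : ℕ) (hi : 0 < i) (hj : 0 < j) (hi' : 0 < i') (hj' : 0 < j')
    (h1 : Nat.Coprime i j) (h2 : Nat.Coprime i' j') (hne : (i, j) ≠ (i', j')) (A B A' B' : ℕ)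
    (e1 : A * i + B * j = A' * i + B' * j) (e2 : A * i' + B * j' = A' * i' + B' * j') :
    A = A' ∧ B = B' := by
  have hdet : (i : ℤ) * j' - i' * j ≠ 0 := by
    intro h
    apply hne
    have := coprime_lin i j i' j' hi hj hi' hj' h1 h2 (by zify; linarith)
    rw [this.1, this.2]
  zify at e1 e2 ⊢
  have k1 : ((A : ℤ) - A') * ((i : ℤ) * j' - i' * j) = 0 := by linear_combination j' * e1 - j * e2
  have k2 : ((B : ℤ) - B') * ((i : ℤ) * j' - i' * j) = 0 := by linear_combination i * e2 - i' * e1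
  constructor
  · have := (mul_eq_zero.1 k1).resolve_right hdet; linarith
  · have := (mul_eq_zero.1 k2).resolve_right hdet; linarith

lemma ex_inj (c : ℤ) (i j i' j' : ℕ) (hi : 0 < i) (hj : 0 < j) (hi' : 0 < i') (hj' : 0 < j')
    (h1 : Nat.Coprime i j) (h2 : Nat.Coprime i' j') (hne : (i, j) ≠ (i', j')) :
    ∀ (N N' : List ((ℕ × ℕ) × ℤ)) (F F' : ℕ × ℕ), (∀ x ∈ N, x.2 ≠ c ∧ 0 < x.1.1 + x.1.2) →
    (∀ x ∈ N', x.2 ≠ c ∧ 0 < x.1.1 + x.1.2) → ex c i j N F = ex c i j N' F' →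
    ex c i' j' N F = ex c i' j' N' F' → N = N' ∧ F = F' := by
  have hr : ∀ (n n' : ℕ) (d : ℤ) (l : List ℤ), d ≠ c →
      List.replicate n c = List.replicate n' c ++ d :: l → False := by
    intro n n' d l hd h
    exact hd (List.eq_of_mem_replicate (n := n) (by rw [h]; simp))
  have hp : ∀ A B x y : ℕ, 0 < x → 0 < y → 0 < A + B → 0 < A * x + B * y := by
    intro A B x y hx hy h
    rcases Nat.eq_zero_or_pos A with rfl | hA
    · have := Nat.mul_pos (show 0 < B by omega) hy; omega
    · have := Nat.mul_pos hA hx; omega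
  intro N
  induction N with
  | nil =>
    intro N' F F' _ hN' e1 e2
    cases N' with
    | nil =>
      simp only [ex] at e1 e2
      have k1 := congrArg List.length e1
      have k2 := congrArg List.length e2
      simp only [List.length_replicate] at k1 k2
      have := lin_pair i j i' j' hi hj hi' hj' h1 h2 hne _ _ _ _ k1 k2
      exact ⟨rfl, Prod.ext this.1 this.2⟩
    | cons y N' => exact (hr _ _ _ _ (hN' y (by simp)).1 e1).elim
  | cons x N ih =>
    intro N' F F' hN hN' e1 e2
    cases N' with
    | nil => exact (hr _ _ _ _ (hN x (by simp)).1 e1.symm).elim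
    | cons y N' =>
      have gx := hN x (by simp)
      have gy := hN' y (by simp)
      obtain ⟨a1, a2, a3⟩ := rep_cons_inj c _ _ _ _ _ _ gx.1 gy.1 e1
      obtain ⟨b1, b2, b3⟩ := rep_cons_inj c _ _ _ _ _ _ gx.1 gy.1 e2
      have p1 := hp x.1.1 x.1.2 i j hi hj gx.2
      have p2 := hp x.1.1 x.1.2 i' j' hi' hj' gx.2
      have p3 := hp y.1.1 y.1.2 i j hi hj gy.2
      have p4 := hp y.1.1 y.1.2 i' j' hi' hj' gy.2
      have := lin_pair i j i' j' hi hj hi' hj' h1 h2 hne x.1.1 x.1.2 y.1.1 y.1.2 (by omega) (by omega)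
      obtain ⟨r1, r2⟩ := ih N' F F' (fun z hz => hN z (by simp [hz])) (fun z hz => hN' z (by simp [hz])) a3 b3
      have hxy : x = y := Prod.ext (Prod.ext this.1 this.2) a2
      exact ⟨by rw [hxy, r1], r2⟩

lemma famI (c : ℤ) (a b a' b' a1 b1 : ℕ) (h1 : Nat.Coprime (a + 1) (b + 1))
    (h2 : Nat.Coprime (a' + 1) (b' + 1)) (hne : (a, b) ≠ (a', b')) (U V : List (Bool × ℤ))
    (e1 : XX (EE (List.replicate a c) (List.replicate b c)) U = XX (EE (List.replicate a c) (List.replicate b c)) V)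
    (e2 : XX (EE (List.replicate a' c) (List.replicate b' c)) U = XX (EE (List.replicate a' c) (List.replicate b' c)) V) :
    XX (EE (List.replicate a1 c) (List.replicate b1 c)) U = XX (EE (List.replicate a1 c) (List.replicate b1 c)) V := by
  have k : ∀ a b U, XX (EE (List.replicate a c) (List.replicate b c)) U
      = ex c (a + 1) (b + 1) (nf c 0 0 U).1 (nf c 0 0 U).2 := by
    intro a b U; have := nf_ex c a b U 0 0; simpa using this
  rw [k, k] at e1 e2 ⊢
  obtain ⟨r1, r2⟩ := ex_inj c _ _ _ _ (Nat.succ_pos _) (Nat.succ_pos _) (Nat.succ_pos _) (Nat.succ_pos _)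
    h1 h2 (by simpa using hne) _ _ _ _ (nf_good c U 0 0) (nf_good c V 0 0) e1 e2
  rw [r1, r2]
end WE

namespace WE

structure Dat where
  s : ℤ
  t : ℤ
  e : List ℤ
  f : List ℤ

def Dat.ok (D : Dat) : Prop := D.e.length ≤ D.f.length ∧ Nat.Coprime (D.e.length + 1) (D.f.length + 1)
def Dat.ps (D : Dat) (ρ p : Fin 3) : Fin 3 → GG := Ph ρ p (nz D.s) (nz D.t) (EE D.e D.f)

def KK (μ : ℕ) : ℕ := if μ = 1 then 1 else 2 * μ + 1

lemma side_color (ρ p : Fin 3) (hρp : ρ ≠ p) (u v : List (Fin 3)) (hp : u.Perm v) (hne : u ≠ v)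
    (μ : ℕ) (hμ : 1 ≤ μ) (hμp : u.count p ≤ μ) :
    ∃ col : Dat → ℕ,
      (∀ D : Dat, D.ok → ev (D.ps ρ p) u = ev (D.ps ρ p) v → col D < KK μ) ∧
      ∀ D1 D2 D3 : Dat, D1.ok → D2.ok → D3.ok → ev (D1.ps ρ p) u = ev (D1.ps ρ p) v →
        ev (D2.ps ρ p) u = ev (D2.ps ρ p) v → ev (D3.ps ρ p) u = ev (D3.ps ρ p) v →
        col D1 = col D2 → col D1 = col D3 →
        (∀ w w', ev (D2.ps ρ p) w = ev (D2.ps ρ p) w' → ev (D3.ps ρ p) w = ev (D3.ps ρ p) w' →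
          ev (D1.ps ρ p) w = ev (D1.ps ρ p) w') ∨ D2 = D3 := by
  classical
  obtain ⟨s0, t0, c0, C, hC, hall⟩ := side_lemma ρ p hρp u v hp hne μ hμ hμp
  let rep : Dat → Prop := fun D =>
    D.e = List.replicate D.e.length c0 ∧ D.f = List.replicate D.f.length c0
  set m := C.length + 1 with hm
  let col : Dat → ℕ := fun D => if rep D then 0 else if D.f.length < m then 1 + D.f.length
    else 1 + m + D.f.length % m
  have hmod : ∀ x, x % m < m := fun x => Nat.mod_lt _ (by omega)
  have hcl : (c0 :: C).length = m := rfl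
  refine ⟨col, ?_, ?_⟩
  · intro D hD hs
    have h := hall D.s D.t D.e D.f hD.1 hD.2 hs
    by_cases hr : rep D
    · simp only [col, hr, if_true, KK]; split_ifs <;> omega
    · have h2 := h.2.2.resolve_right hr
      have hm1 : m ≠ 1 := by
        intro h1
        have hC0 : C = [] := List.length_eq_zero_iff.1 (by omega)
        apply hr
        refine ⟨by rw [h2.1]; rfl, ?_⟩
        refine List.eq_replicate_iff.2 ⟨rfl, ?_⟩
        exact prefix_all (fun k => k = c0) (c0 :: C) D.f h2.2 (by simp) (by simp [hC0])
      have hμ1 : μ ≠ 1 := by omega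
      simp only [col, hr, if_false, KK, hμ1]
      have := hmod D.f.length
      split_ifs <;> omega
  · intro D1 D2 D3 o1 o2 o3 e1 e2 e3 c2 c3
    have h1 := hall D1.s D1.t D1.e D1.f o1.1 o1.2 e1
    have h2 := hall D2.s D2.t D2.e D2.f o2.1 o2.2 e2
    have h3 := hall D3.s D3.t D3.e D3.f o3.1 o3.2 e3
    clear e1 e2 e3
    have hred : (∀ U V, XX (EE D2.e D2.f) U = XX (EE D2.e D2.f) V → XX (EE D3.e D3.f) U = XX (EE D3.e D3.f) V →
        XX (EE D1.e D1.f) U = XX (EE D1.e D1.f) V) →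
        (∀ w w', ev (D2.ps ρ p) w = ev (D2.ps ρ p) w' → ev (D3.ps ρ p) w = ev (D3.ps ρ p) w' →
          ev (D1.ps ρ p) w = ev (D1.ps ρ p) w') := by
      intro H w w'
      simp only [Dat.ps, tk_iff, h1.1, h2.1, h3.1, h1.2.1, h2.2.1, h3.2.1]
      exact fun a b => ⟨a.1, H _ _ a.2 b.2⟩
    by_cases hex : D2 = D3
    · exact Or.inr hex
    left
    apply hred
    have hext : D2.e = D3.e → D2.f = D3.f → False := by
      intro a b
      apply hex
      have a1 : D2.s = D3.s := h2.1.trans h3.1.symm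
      have a2 : D2.t = D3.t := h2.2.1.trans h3.2.1.symm
      cases D2; cases D3; simp_all
    have hz : ∀ D, rep D ↔ col D = 0 := by
      intro D
      by_cases hr : rep D
      · simp [col, hr]
      · simp only [col, hr, if_false, false_iff]; split_ifs <;> omega
    by_cases hr : rep D1
    · have r2 : rep D2 := by rw [hz, ← c2, ← hz]; exact hr
      have r3 : rep D3 := by rw [hz, ← c3, ← hz]; exact hr
      intro U V
      rw [hr.1, hr.2, r2.1, r2.2, r3.1, r3.2]
      apply famI c0 _ _ _ _ _ _ o2.2 o3.2
      intro hh
      rw [Prod.mk.injEq] at hh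
      exact hext (by rw [r2.1, r3.1, hh.1]) (by rw [r2.2, r3.2, hh.2])
    · have r2 : ¬ rep D2 := by rw [hz, ← c2, ← hz]; exact hr
      have r3 : ¬ rep D3 := by rw [hz, ← c3, ← hz]; exact hr
      have g1 := h1.2.2.resolve_right hr
      have g2 := h2.2.2.resolve_right r2
      have g3 := h3.2.2.resolve_right r3
      have hlen : D2.f.length = D3.f.length → False := by
        intro hl
        refine hext (by rw [g2.1, g3.1]) ?_
        rw [per_eq (c0 :: C) D2.f (by simp) g2.2, per_eq (c0 :: C) D3.f (by simp) g3.2, hl]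
      have m1 := hmod D1.f.length
      have m2 := hmod D2.f.length
      have m3 := hmod D3.f.length
      simp only [col, hr, r2, r3, if_false] at c2 c3
      intro U V
      rw [g1.1, g2.1, g3.1]
      split_ifs at c2 c3 with k1 k2 k3
      all_goals first
        | (exfalso; omega)
        | exact (hlen (by omega)).elim
        | exact famF (c0 :: C) D1.f D2.f D3.f (by simp) g1.2 g2.2 g3.2 (by rw [hcl]; omega) (by rw [hcl]; omega)
            (by rw [hcl]; omega) (by rw [hcl]; omega) (by rw [hcl]; omega) (fun hh => hlen hh) U V
end WE

namespace WE

lemma det (ρ p : Fin 3) (hρp : ρ ≠ p) (u v : List (Fin 3)) (hp : u.Perm v) (hne : u ≠ v)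
    (D1 D2 : Dat) (o1 : D1.ok) (o2 : D2.ok)
    (e1 : ev (D1.ps ρ p) u = ev (D1.ps ρ p) v) (e2 : ev (D2.ps ρ p) u = ev (D2.ps ρ p) v)
    (l1 : D1.e.length = D2.e.length) (l2 : D1.f.length = D2.f.length) : D1 = D2 := by
  obtain ⟨s0, t0, c0, C, hC, hall⟩ := side_lemma' ρ p hρp u v hp hne (u.count p + 1) (by omega) (by omega)
  have h1 := hall D1.s D1.t D1.e D1.f o1.1 o1.2 e1
  have h2 := hall D2.s D2.t D2.e D2.f o2.1 o2.2 e2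
  clear hall e1 e2
  have a1 : D1.s = D2.s := h1.1.trans h2.1.symm
  have a2 : D1.t = D2.t := h1.2.1.trans h2.2.1.symm
  have key : D1.e = D2.e ∧ D1.f = D2.f := by
    rcases h1.2.2 with g1 | g1 <;> rcases h2.2.2 with g2 | g2
    · refine ⟨by rw [g1.1, g2.1], ?_⟩
      rw [per_eq (c0 :: C) D1.f (by simp) g1.2, per_eq (c0 :: C) D2.f (by simp) g2.2, l2]
    · exact absurd (List.length_eq_zero_iff.1 (by rw [← l1, g1.1]; rfl)) g2.1
    · exact absurd (List.length_eq_zero_iff.1 (by rw [l1, g2.1]; rfl)) g1.1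
    · exact ⟨by rw [g1.2.1, g2.2.1, l1], by rw [g1.2.2, g2.2.2, l2]⟩
  cases D1; cases D2; simp_all

lemma two_others : ∀ r : Fin 3, ∃ p q : Fin 3, r ≠ p ∧ r ≠ q ∧ p < q := by decide

lemma normal_aux (ψ : Fin 3 → GG) (r p q : Fin 3) (hrp : r ≠ p) (hrq : r ≠ q) (hpq : p ≠ q)
    (hr : ψ r = ga) (i j : ℕ) (hi : Mdeg i (ψ p)) (hj : Mdeg j (ψ q)) (i0 : 0 < i) (j0 : 0 < j)
    (hc : Nat.Coprime i j) (hij : i ≤ j) :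
    ∃ D : Dat, D.ok ∧ D.e.length + 1 = i ∧ D.f.length + 1 = j ∧
      ∀ w w', ev ψ w = ev ψ w' ↔ ev (D.ps r p) w = ev (D.ps r p) w' := by
  obtain ⟨s, e, t, hp, he⟩ := hi.form i0
  obtain ⟨s', f, t', hq, hf⟩ := hj.form j0
  refine ⟨⟨s' - s, t' - t, e.map (· + (-s + -t)), f.map (· + (-s + -t))⟩, ⟨by simp; omega, by simpa [he, hf] using hc⟩,
    by simpa using he, by simpa using hf, ?_⟩
  intro w w'
  rw [← (sh_inj (-s) (-t)).eq_iff, ev_hom, ev_hom]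
  have : (fun x => sh (-s) (-t) (ψ x)) = Dat.ps ⟨s' - s, t' - t, e.map (· + (-s + -t)), f.map (· + (-s + -t))⟩ r p := by
    funext l
    rcases three r p q hrp hrq hpq l with rfl | rfl | rfl
    · simp [Dat.ps, Ph, hr]
    · simp [Dat.ps, Ph, hp, sh_be, hrp.symm, gl, nz, ← mul_assoc]
    · simp only [hq, map_mul, map_zpow, sh_a, sh_be, Dat.ps, Ph, hrq.symm, gl, nz, hpq.symm, if_false, EE_true]
      simp only [← mul_assoc, ← zpow_add, sub_eq_add_neg]
      simp only [mul_assoc, ← zpow_add]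
      simp [add_comm]
  rw [this]

lemma normal (ψ : Fin 3 → GG) (h : RF ψ) : ∃ r p q : Fin 3, r ≠ p ∧ r ≠ q ∧ p ≠ q ∧
    ∃ D : Dat, D.ok ∧ (D.e.length = D.f.length → p < q) ∧
      ∀ w w', ev ψ w = ev ψ w' ↔ ev (D.ps r p) w = ev (D.ps r p) w' := by
  obtain ⟨r, hr, H⟩ := h.get
  obtain ⟨p, q, hp, hq, hpq⟩ := two_others r
  obtain ⟨i, j, hi, hj, i0, j0, hc⟩ := H p q hp hq hpq.ne
  by_cases hij : i ≤ j
  · obtain ⟨D, h1, h2, h3, h4⟩ := normal_aux ψ r p q hp hq hpq.ne hr i j hi hj i0 j0 hc hij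
    exact ⟨r, p, q, hp, hq, hpq.ne, D, h1, fun _ => hpq, h4⟩
  · obtain ⟨D, h1, h2, h3, h4⟩ := normal_aux ψ r q p hq hp hpq.ne' hr j i hj hi j0 i0 hc.symm (by omega)
    exact ⟨r, q, p, hq, hp, hpq.ne', D, h1, fun _ => by omega, h4⟩

def hB : GG →* Multiplicative ℤ := FreeGroup.lift (fun x => if x then Multiplicative.ofAdd 1 else 1)
def hA : GG →* Multiplicative ℤ := FreeGroup.lift (fun x => if x then 1 else Multiplicative.ofAdd 1)
lemma hB_a : hB ga = 1 := by simp [hB, ga]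
lemma hB_b : hB gb = Multiplicative.ofAdd 1 := by simp [hB, gb]
lemma hA_a : hA ga = Multiplicative.ofAdd 1 := by simp [hA, ga]

lemma hB_be (e : List ℤ) : (hB (be e)).toAdd = (e.length : ℤ) + 1 := by
  induction e with
  | nil => simp [hB_b]
  | cons k e ih => simp [be_cons, hB_a, hB_b, ih]; ring

lemma ev_count (θ : GG →* Multiplicative ℤ) (ψ : Fin 3 → GG) (w : List (Fin 3)) :
    (θ (ev ψ w)).toAdd = ∑ l, (w.count l : ℤ) * (θ (ψ l)).toAdd := by
  induction w with
  | nil => simp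
  | cons x w ih =>
    simp only [ev_cons, map_mul, toAdd_mul, ih, List.count_cons, Fin.sum_univ_three]
    fin_cases x <;> simp <;> ring

/-- unbalanced equations: the degrees are determined by the role -/
lemma unb (u v : List (Fin 3)) (hnp : ¬ u.Perm v) (r p q p' q' : Fin 3) (hp : r ≠ p) (hq : r ≠ q) (hpq : p ≠ q)
    (hp' : r ≠ p') (hq' : r ≠ q') (hpq' : p' ≠ q') (D D' : Dat) (o : D.ok) (o' : D'.ok)
    (t : D.e.length = D.f.length → p < q) (t' : D'.e.length = D'.f.length → p' < q')
    (e : ev (D.ps r p) u = ev (D.ps r p) v) (e' : ev (D'.ps r p') u = ev (D'.ps r p') v) :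
    p = p' ∧ D.e.length = D'.e.length ∧ D.f.length = D'.f.length := by
  set n : Fin 3 → ℤ := fun l => (u.count l : ℤ) - v.count l with hn
  have gen : ∀ (θ : GG →* Multiplicative ℤ) (ψ : Fin 3 → GG), ev ψ u = ev ψ v →
      ∑ l, n l * (θ (ψ l)).toAdd = 0 := by
    intro θ ψ h
    have := congrArg (fun g => (θ g).toAdd) h
    simp only [ev_count] at this
    simp only [hn, sub_mul, Finset.sum_sub_distrib, this, sub_self]
  have sum3 : ∀ (p q : Fin 3), r ≠ p → r ≠ q → p ≠ q → ∀ F : Fin 3 → ℤ, ∑ l, F l = F r + F p + F q := by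
    intro p q h1 h2 h3 F
    rw [Fin.sum_univ_three]
    revert h1 h2 h3
    fin_cases r <;> fin_cases p <;> fin_cases q <;> simp <;> intros <;> ring
  have deg : ∀ (p q : Fin 3) (D : Dat), r ≠ p → r ≠ q → p ≠ q → ev (D.ps r p) u = ev (D.ps r p) v →
      n p * (D.e.length + 1) + n q * (D.f.length + 1) = 0 ∧ (n p ≠ 0 ∨ n q ≠ 0) := by
    intro p q D h1 h2 h3 h4
    have a1 := gen hB _ h4
    have a2 := gen hA _ h4
    rw [sum3 p q h1 h2 h3] at a1 a2
    constructor
    · simp [Dat.ps, Ph, hB_a, hB_be, h1.symm, h2.symm, h3.symm, gl] at a1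
      linarith
    · by_contra hcon
      push Not at hcon
      rw [hcon.1, hcon.2] at a2
      simp [Dat.ps, Ph, hA_a] at a2
      apply hnp
      rw [List.perm_iff_count]
      intro l
      have : n l = 0 := by
        rcases three r p q h1 h2 h3 l with rfl | rfl | rfl
        · exact a2
        · exact hcon.1
        · exact hcon.2
      simp only [hn] at this
      omega
  obtain ⟨a1, a2⟩ := deg p q D hp hq hpq e
  obtain ⟨b1, b2⟩ := deg p' q' D' hp' hq' hpq' e'
  have cross : ∀ (x y : ℤ) (i j i' j' : ℕ), x * (i + 1) + y * (j + 1) = 0 → x * (i' + 1) + y * (j' + 1) = 0 →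
      (x ≠ 0 ∨ y ≠ 0) → Nat.Coprime (i+1) (j+1) → Nat.Coprime (i'+1) (j'+1) → i = i' ∧ j = j' := by
    intro x y i j i' j' h1 h2 h3 c1 c2
    have k1 : x * (((i:ℤ)+1) * (j'+1) - (i'+1) * (j+1)) = 0 := by linear_combination (j'+1:ℤ) * h1 - (j+1:ℤ) * h2
    have k2 : y * (((i:ℤ)+1) * (j'+1) - (i'+1) * (j+1)) = 0 := by linear_combination (i+1:ℤ) * h2 - (i'+1:ℤ) * h1
    have k3 : ((i:ℤ)+1) * (j'+1) - (i'+1) * (j+1) = 0 := by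
      rcases h3 with h | h
      · exact (mul_eq_zero.1 k1).resolve_left h
      · exact (mul_eq_zero.1 k2).resolve_left h
    have := coprime_lin (i+1) (j+1) (i'+1) (j'+1) (by omega) (by omega) (by omega) (by omega) c1 c2
      (by zify; linarith)
    omega
  have hpp : (p = p' ∧ q = q') ∨ (p = q' ∧ q = p') := by
    revert hp hq hpq hp' hq' hpq'
    clear * -
    revert r p q p' q'
    decide
  rcases hpp with ⟨rfl, rfl⟩ | ⟨rfl, rfl⟩
  · exact ⟨rfl, cross _ _ _ _ _ _ a1 b1 a2 o.2 o'.2⟩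
  · have := cross _ _ _ _ _ _ a1 (by rw [add_comm]; exact b1) a2 o.2 o'.2.symm
    have h1 := o.1
    have h2 := o'.1
    have h3 := t (by omega)
    have h4 := t' (by omega)
    omega

end WE

namespace WE

lemma tri (S : Finset ℕ) (L δ : ℕ → Fin 3 → ℚ) (h1 : ∀ k ∈ S, L k ⬝ᵥ δ k ≠ 0)
    (h2 : ∀ j ∈ S, ∀ k ∈ S, j < k → L k ⬝ᵥ δ j = 0) : S.card ≤ 3 := by
  have hli : LinearIndependent ℚ (fun k : S => L k) := by
    rw [Fintype.linearIndependent_iff]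
    intro c hc
    have key : ∀ n : ℕ, ∀ k : S, (k : ℕ) = n → c k = 0 := by
      intro n
      induction n using Nat.strong_induction_on with
      | _ n ih =>
        intro k hk
        have h3 : (∑ i, c i • L i) ⬝ᵥ δ k = 0 := by rw [hc]; simp
        rw [sum_dotProduct, Finset.sum_eq_single k] at h3
        · rw [smul_dotProduct, smul_eq_mul] at h3
          exact (mul_eq_zero.1 h3).resolve_right (h1 k k.2)
        · intro i _ hik
          rw [smul_dotProduct, smul_eq_mul]
          rcases lt_or_gt_of_ne (fun h => hik (Subtype.ext h) : (i : ℕ) ≠ k) with hl | hl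
          · rw [ih i (by omega) i rfl, zero_mul]
          · rw [h2 k k.2 i i.2 hl, mul_zero]
        · intro h; exact absurd (Finset.mem_univ _) h
    exact fun k => key _ k rfl
  have := hli.fintype_card_le_finrank
  simpa using this

lemma mA_length (h : Fin 3 → List ℕ) (w : List (Fin 3)) :
    (mApply h w).length = ∑ l, w.count l * (h l).length := by
  induction w with
  | nil => simp
  | cons x w ih =>
    simp only [mA_cons, List.length_append, ih, List.count_cons, Fin.sum_univ_three]
    fin_cases x <;> simp <;> ring

def Com (h : Fin 3 → List ℕ) : Prop := ∀ k l, h k ++ h l = h l ++ h k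
def lv (h : Fin 3 → List ℕ) : Fin 3 → ℚ := fun l => ((h l).length : ℚ)
def pv (E : List (Fin 3) × List (Fin 3)) : Fin 3 → ℚ := fun l => (E.1.count l : ℚ) - E.2.count l
def sol (h : Fin 3 → List ℕ) (E : List (Fin 3) × List (Fin 3)) : Prop := mApply h E.1 = mApply h E.2

lemma com_sol (h : Fin 3 → List ℕ) (hc : Com h) (E : List (Fin 3) × List (Fin 3)) :
    sol h E ↔ lv h ⬝ᵥ pv E = 0 := by
  have h1 : sol h E ↔ (mApply h E.1).length = (mApply h E.2).length :=
    ⟨fun h => congrArg List.length h, fun hl => (List.append_inj (comm_all h hc E.1 E.2) hl).1⟩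
  rw [h1, mA_length, mA_length, ← sub_eq_zero (a := lv h ⬝ᵥ pv E), sub_zero]
  have h2 : lv h ⬝ᵥ pv E = ((∑ l, E.1.count l * (h l).length : ℕ) : ℚ) - ((∑ l, E.2.count l * (h l).length : ℕ) : ℚ) := by
    simp [dotProduct, lv, pv, Fin.sum_univ_three]; ring
  rw [h2, sub_eq_zero, Nat.cast_inj]

lemma sol_len (h : Fin 3 → List ℕ) (E : List (Fin 3) × List (Fin 3)) (hs : sol h E) :
    lv h ⬝ᵥ pv E = 0 := by
  have h2 : lv h ⬝ᵥ pv E = ((∑ l, E.1.count l * (h l).length : ℕ) : ℚ) - ((∑ l, E.2.count l * (h l).length : ℕ) : ℚ) := by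
    simp [dotProduct, lv, pv, Fin.sum_univ_three]; ring
  rw [h2, ← mA_length, ← mA_length, hs, sub_self]

def Chn (m : ℕ) (E : ℕ → List (Fin 3) × List (Fin 3)) (h : ℕ → Fin 3 → List ℕ) : Prop :=
  ∀ k, 1 ≤ k → k < m → (∀ j < k, sol (h k) (E j)) ∧ ¬ sol (h k) (E k)

section chain
variable {m : ℕ} {E : ℕ → List (Fin 3) × List (Fin 3)} {h : ℕ → Fin 3 → List ℕ}

lemma com_card (H : Chn m E h) (S : Finset ℕ) (hS : ∀ k ∈ S, 1 ≤ k ∧ k < m ∧ Com (h k)) : S.card ≤ 3 := by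
  refine tri S (fun k => lv (h k)) (fun k => pv (E k)) ?_ ?_
  · intro k hk
    obtain ⟨a, b, c⟩ := hS k hk
    rw [Ne, ← com_sol _ c]; exact (H k a b).2
  · intro j hj k hk hjk
    obtain ⟨a, b, c⟩ := hS k hk
    exact sol_len _ _ ((H k a b).1 j hjk)

lemma com_card_unb (H : Chn m E h) (hnp : ¬ (E 0).1.Perm (E 0).2) (S : Finset ℕ)
    (hS : ∀ k ∈ S, 1 ≤ k ∧ k < m ∧ Com (h k)) : S.card ≤ 2 := by
  have h0 : 0 ∉ S := fun h0 => by have := (hS 0 h0).1; omega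
  have hcard : (insert 0 S).card ≤ 3 := by
    refine tri (insert 0 S) (fun k => if k = 0 then pv (E 0) else lv (h k)) (fun k => pv (E k)) ?_ ?_
    · intro k hk
      rcases Finset.mem_insert.1 hk with rfl | hk
      · simp only [if_true]
        rw [Ne, dotProduct_self_eq_zero]
        intro hz
        apply hnp
        rw [List.perm_iff_count]
        intro l
        have := congrFun hz l
        simp only [pv, Pi.zero_apply, sub_eq_zero, Nat.cast_inj] at this
        exact this
      · obtain ⟨a, b, c⟩ := hS k hk
        rw [if_neg (by omega), Ne, ← com_sol _ c]; exact (H k a b).2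
    · intro j hj k hk hjk
      rcases Finset.mem_insert.1 hk with rfl | hk
      · omega
      obtain ⟨a, b, c⟩ := hS k hk
      rw [if_neg (by omega)]
      exact sol_len _ _ ((H k a b).1 j hjk)
  rw [Finset.card_insert_of_notMem h0] at hcard
  omega

lemma T2 (H : Chn m E h) {k k' : ℕ} (hk : 1 ≤ k) (hk' : k' < m) (hkk : k < k')
    (hh : ∀ w w', mApply (h k') w = mApply (h k') w' → mApply (h k) w = mApply (h k) w') : False :=
  (H k hk (by omega)).2 (hh _ _ ((H k' (by omega) hk').1 k hkk))

lemma T2' (H : Chn m E h) {k k' : ℕ} (hk : 1 ≤ k) (hkm : k < m) (hk' : 1 ≤ k') (hkm' : k' < m)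
    (hh : ∀ w w', mApply (h k) w = mApply (h k) w' ↔ mApply (h k') w = mApply (h k') w') : k = k' := by
  rcases lt_trichotomy k k' with hl | hl | hl
  · exact (T2 H hk hkm' hl (fun w w' => (hh w w').2)).elim
  · exact hl
  · exact (T2 H hk' hkm hl (fun w w' => (hh w w').1)).elim

lemma erase_ker (g : Fin 3 → List ℕ) (l p q : Fin 3) (hp : l ≠ p) (hq : l ≠ q) (hpq : p ≠ q) (hg : g l = [])
    (hc : ¬ Com g) (w w' : List (Fin 3)) : mApply g w = mApply g w' ↔
      (w.filter (fun x => x ≠ l)).map (fun x => decide (x = q)) = (w'.filter (fun x => x ≠ l)).map (fun x => decide (x = q)) := by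
  have h1 : ∀ w, mApply g w = bw (g p) (g q) ((w.filter (fun x => x ≠ l)).map (fun x => decide (x = q))) := by
    intro w
    induction w with
    | nil => rfl
    | cons x w ih =>
      rw [mA_cons, ih]
      rcases three l p q hp hq hpq x with rfl | rfl | rfl
      · simp [hg]
      · simp [hp.symm, hpq]
      · simp [hq.symm]
  have h2 : g p ++ g q ≠ g q ++ g p := by
    intro h2
    apply hc
    intro a b
    rcases three l p q hp hq hpq a with rfl | rfl | rfl <;> rcases three _ _ _ hp hq hpq b with rfl | rfl | rfl <;>
      simp [hg, h2]
  rw [h1, h1]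
  exact ⟨fun hh => bw_inj _ _ h2 _ _ hh, fun hh => by rw [hh]⟩

lemma erase_card (H : Chn m E h) (S : Finset ℕ)
    (hS : ∀ k ∈ S, 1 ≤ k ∧ k < m ∧ ¬ Com (h k) ∧ ∃ l, h k l = []) : S.card ≤ 3 := by
  have hl : ∀ k, ∃ l, k ∈ S → h k l = [] := by
    intro k
    by_cases hk : k ∈ S
    · obtain ⟨l, hl⟩ := (hS k hk).2.2.2
      exact ⟨l, fun _ => hl⟩
    · exact ⟨0, fun h => absurd h hk⟩
  choose l hl using hl
  have := Finset.card_le_card_of_injOn (s := S) (t := (Finset.univ : Finset (Fin 3))) l (by simp) ?_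
  · simpa using this
  intro k hk k' hk' hkk
  obtain ⟨p, q, hp, hq, hpq⟩ := two_others (l k)
  obtain ⟨a, b, c, -⟩ := hS k hk
  obtain ⟨a', b', c', -⟩ := hS k' hk'
  refine T2' H a b a' b' (fun w w' => ?_)
  have e2 := hl k' hk'
  rw [← hkk] at e2
  rw [erase_ker (h k) (l k) p q hp hq hpq.ne (hl k hk) c,
    erase_ker (h k') (l k) p q hp hq hpq.ne e2 c']

lemma thmA' (g : Fin 3 → List ℕ) (hne : ∀ l, g l ≠ []) (hc : ¬ Com g) (u v : List (Fin 3)) (hp : u.Perm v)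
    (huv : u ≠ v) (hs : mApply g u = mApply g v) :
    ∃ r p q : Fin 3, r ≠ p ∧ r ≠ q ∧ p ≠ q ∧
    ∃ D : Dat, D.ok ∧ (D.e.length = D.f.length → p < q) ∧
      ∀ w w', mApply g w = mApply g w' ↔ ev (D.ps r p) w = ev (D.ps r p) w' := by
  obtain ⟨ψ, hψ, hk⟩ := thmA _ g le_rfl hne hc u v hp huv hs
  obtain ⟨r, p, q, h1, h2, h3, D, h4, h5, h6⟩ := normal ψ hψ
  exact ⟨r, p, q, h1, h2, h3, D, h4, h5, fun w w' => (hk w w').trans (h6 w w')⟩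

lemma sorted3 (S : Finset ℕ) (hS : 2 < S.card) : ∃ a ∈ S, ∃ b ∈ S, ∃ c ∈ S, a < b ∧ b < c := by
  obtain ⟨T, hT, hc⟩ := Finset.exists_subset_card_eq (n := 3) (s := S) (by omega)
  let f := T.orderEmbOfFin hc
  refine ⟨f 0, hT (T.orderEmbOfFin_mem hc 0), f 1, hT (T.orderEmbOfFin_mem hc 1), f 2,
    hT (T.orderEmbOfFin_mem hc 2), ?_, ?_⟩
  · exact f.strictMono (by decide)
  · exact f.strictMono (by decide)

lemma main_card (H : Chn m E h) (hE : (E 0).1 ≠ (E 0).2) (hp : (E 0).1.Perm (E 0).2) (μ : ℕ) (hμ : 1 ≤ μ)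
    (hμp : ∀ p, (E 0).1.count p ≤ μ) (S : Finset ℕ)
    (hS : ∀ k ∈ S, 1 ≤ k ∧ k < m ∧ ¬ Com (h k) ∧ ∀ l, h k l ≠ []) : S.card ≤ 2 * (6 * KK μ) := by
  classical
  have h1 : ∀ k : ℕ, ∃ (x : Fin 3 × Fin 3) (D : Dat), k ∈ S → x.1 ≠ x.2 ∧ D.ok ∧
      ∀ w w', mApply (h k) w = mApply (h k) w' ↔ ev (D.ps x.1 x.2) w = ev (D.ps x.1 x.2) w' := by
    intro k
    by_cases hk : k ∈ S
    · obtain ⟨a, b, c, d⟩ := hS k hk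
      obtain ⟨r, p, q, h1, h2, h3, D, h4, h5, h6⟩ := thmA' (h k) d c _ _ hp hE ((H k a b).1 0 (by omega))
      exact ⟨(r, p), D, fun _ => ⟨h1, h4, h6⟩⟩
    · exact ⟨(0, 0), ⟨0, 0, [], []⟩, fun h => absurd h hk⟩
  choose x D hxD using h1
  have h2 : ∀ y : Fin 3 × Fin 3, ∃ col : Dat → ℕ, y.1 ≠ y.2 →
      (∀ D : Dat, D.ok → ev (D.ps y.1 y.2) (E 0).1 = ev (D.ps y.1 y.2) (E 0).2 → col D < KK μ) ∧
      ∀ D1 D2 D3 : Dat, D1.ok → D2.ok → D3.ok → ev (D1.ps y.1 y.2) (E 0).1 = ev (D1.ps y.1 y.2) (E 0).2 →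
        ev (D2.ps y.1 y.2) (E 0).1 = ev (D2.ps y.1 y.2) (E 0).2 → ev (D3.ps y.1 y.2) (E 0).1 = ev (D3.ps y.1 y.2) (E 0).2 →
        col D1 = col D2 → col D1 = col D3 →
        (∀ w w', ev (D2.ps y.1 y.2) w = ev (D2.ps y.1 y.2) w' → ev (D3.ps y.1 y.2) w = ev (D3.ps y.1 y.2) w' →
          ev (D1.ps y.1 y.2) w = ev (D1.ps y.1 y.2) w') ∨ D2 = D3 := by
    intro y
    by_cases hy : y.1 = y.2
    · exact ⟨fun _ => 0, fun h => absurd hy h⟩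
    · obtain ⟨col, hc⟩ := side_color y.1 y.2 hy _ _ hp hE μ hμ (hμp _)
      exact ⟨col, fun _ => hc⟩
  choose col hcol using h2
  have hsat : ∀ k ∈ S, ev ((D k).ps (x k).1 (x k).2) (E 0).1 = ev ((D k).ps (x k).1 (x k).2) (E 0).2 := by
    intro k hk
    obtain ⟨a, b, -, -⟩ := hS k hk
    exact ((hxD k hk).2.2 _ _).1 ((H k a b).1 0 (by omega))
  let P : Finset (Fin 3 × Fin 3) := Finset.univ.filter (fun y => y.1 ≠ y.2)
  have hPc : P.card = 6 := by decide
  let T := P ×ˢ Finset.range (KK μ)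
  have hTc : T.card = 6 * KK μ := by rw [Finset.card_product, hPc, Finset.card_range]
  rw [← hTc]
  refine Finset.card_le_mul_card_image_of_maps_to (f := fun k => (x k, col (x k) (D k))) ?_ 2 ?_
  · intro k hk
    have a := hxD k hk
    refine Finset.mem_product.2 ⟨Finset.mem_filter.2 ⟨Finset.mem_univ _, a.1⟩, Finset.mem_range.2 ?_⟩
    exact (hcol _ a.1).1 _ a.2.1 (hsat k hk)
  · rintro ⟨y, z⟩ _
    by_contra hcon
    obtain ⟨k1, m1, k2, m2, k3, m3, l12, l23⟩ := sorted3 _ (not_le.1 hcon)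
    simp only [Finset.mem_filter, Prod.mk.injEq] at m1 m2 m3
    obtain ⟨m1, y1, z1⟩ := m1
    obtain ⟨m2, y2, z2⟩ := m2
    obtain ⟨m3, y3, z3⟩ := m3
    have s1 := hsat _ m1
    have s2 := hsat _ m2
    have s3 := hsat _ m3
    have a1 := hxD _ m1
    have a2 := hxD _ m2
    have a3 := hxD _ m3
    have b1 := hS _ m1
    have b2 := hS _ m2
    have b3 := hS _ m3
    rw [y1] at s1 a1 z1
    rw [y2] at s2 a2 z2
    rw [y3] at s3 a3 z3
    rcases (hcol y a1.1).2 _ _ _ a1.2.1 a2.2.1 a3.2.1 s1 s2 s3 (z1.trans z2.symm) (z1.trans z3.symm) with hh | hh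
    · have := hh (E k1).1 (E k1).2 ((a2.2.2 _ _).1 ((H k2 b2.1 b2.2.1).1 k1 l12))
        ((a3.2.2 _ _).1 ((H k3 b3.1 b3.2.1).1 k1 (by omega)))
      exact (H k1 b1.1 b1.2.1).2 ((a1.2.2 _ _).2 this)
    · refine T2 H b2.1 b3.2.1 l23 (fun w w' => ?_)
      rw [a2.2.2, a3.2.2, hh]
      exact id

lemma main_card_unb (H : Chn m E h) (hnp : ¬ (E 0).1.Perm (E 0).2) (S : Finset ℕ)
    (hS : ∀ k ∈ S, 1 ≤ k ∧ k < m ∧ ¬ Com (h k) ∧ ∀ l, h k l ≠ []) : S.card ≤ 3 := by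
  classical
  rcases S.eq_empty_or_nonempty with rfl | ⟨k0, hk0⟩
  · simp
  set u := (E 0).1 with hu
  set v := (E 0).2 with hv
  have hsol : ∀ k ∈ S, mApply (h k) u = mApply (h k) v := by
    intro k hk
    obtain ⟨a, b, -, -⟩ := hS k hk
    exact (H k a b).1 0 (by omega)
  have hne : u ++ v ≠ v ++ u := by
    intro he
    obtain ⟨a, b, c, d⟩ := hS k0 hk0
    -- equal-length would give `u = v`; otherwise one is a proper prefix
    have hs := hsol k0 hk0
    have pre : ∀ u v : List (Fin 3), u ++ v = v ++ u → u.length ≤ v.length → mApply (h k0) u = mApply (h k0) v →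
        u = v := by
      intro u v he hl hs
      have hpre : u <+: v := by
        have h1 : u <+: v ++ u := ⟨v, he⟩
        exact List.prefix_of_prefix_length_le h1 (List.prefix_append v u) hl
      obtain ⟨z, rfl⟩ := hpre
      rw [mA_append] at hs
      have hz : mApply (h k0) z = [] := by simpa using hs
      cases z with
      | nil => simp
      | cons x z => rw [mA_cons, List.append_eq_nil_iff] at hz; exact absurd hz.1 (d x)
    apply hnp
    rcases le_total u.length v.length with hl | hl
    · rw [pre u v he hl hs]
    · rw [pre v u he.symm hl hs.symm]
  have hpm : (u ++ v).Perm (v ++ u) := List.perm_append_comm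
  have h1 : ∀ k : ℕ, ∃ (r p q : Fin 3) (D : Dat), k ∈ S → r ≠ p ∧ r ≠ q ∧ p ≠ q ∧ D.ok ∧
      (D.e.length = D.f.length → p < q) ∧
      ∀ w w', mApply (h k) w = mApply (h k) w' ↔ ev (D.ps r p) w = ev (D.ps r p) w' := by
    intro k
    by_cases hk : k ∈ S
    · obtain ⟨a, b, c, d⟩ := hS k hk
      obtain ⟨r, p, q, h1, h2, h3, D, h4, h5, h6⟩ := thmA' (h k) d c _ _ hpm hne
        (by rw [mA_append, mA_append, hsol k hk])
      exact ⟨r, p, q, D, fun _ => ⟨h1, h2, h3, h4, h5, h6⟩⟩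
    · exact ⟨0, 0, 0, ⟨0, 0, [], []⟩, fun h => absurd h hk⟩
  choose r p q D hD using h1
  have := Finset.card_le_card_of_injOn (s := S) (t := (Finset.univ : Finset (Fin 3))) r (by simp) ?_
  · simpa using this
  intro k hk k' hk' hkk
  obtain ⟨c1, c2, c3, c4, c5, c6⟩ := hD k hk
  obtain ⟨d1, d2, d3, d4, d5, d6⟩ := hD k' hk'
  have s1 := (c6 _ _).1 (hsol k hk)
  have s2 := (d6 _ _).1 (hsol k' hk')
  rw [← hkk] at d1 d2 d6 s2
  obtain ⟨hpp, l1, l2⟩ := unb u v hnp (r k) (p k) (q k) (p k') (q k') c1 c2 c3 d1 d2 d3 (D k) (D k') c4 d4 c5 d5 s1 s2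
  rw [← hpp] at d6 s2
  have hDD : D k = D k' := det (r k) (p k) c1 _ _ hpm hne _ _ c4 d4
    (by rw [ev_append, ev_append, s1]) (by rw [ev_append, ev_append, s2]) l1 l2
  obtain ⟨a, b, -⟩ := hS k hk
  obtain ⟨a', b', -⟩ := hS k' hk'
  refine T2' H a b a' b' (fun w w' => ?_)
  rw [c6, d6, hDD]

lemma split_card (m a b c : ℕ) (h : ℕ → Fin 3 → List ℕ)
    (ha : ∀ S : Finset ℕ, (∀ k ∈ S, 1 ≤ k ∧ k < m ∧ Com (h k)) → S.card ≤ a)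
    (hb : ∀ S : Finset ℕ, (∀ k ∈ S, 1 ≤ k ∧ k < m ∧ ¬ Com (h k) ∧ ∃ l, h k l = []) → S.card ≤ b)
    (hc : ∀ S : Finset ℕ, (∀ k ∈ S, 1 ≤ k ∧ k < m ∧ ¬ Com (h k) ∧ ∀ l, h k l ≠ []) → S.card ≤ c) :
    m ≤ 1 + (a + b + c) := by
  classical
  let I := Finset.Ico 1 m
  have h1 := Finset.card_filter_add_card_filter_not (s := I) (fun k => Com (h k))
  have h2 := Finset.card_filter_add_card_filter_not (s := I.filter (fun k => ¬ Com (h k))) (fun k => ∃ l, h k l = [])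
  have hI : I.card = m - 1 := by simp [I]
  have k1 := ha (I.filter (fun k => Com (h k))) (by
    intro k hk; simp [I] at hk; exact ⟨hk.1.1, hk.1.2, hk.2⟩)
  have k2 := hb ((I.filter (fun k => ¬ Com (h k))).filter (fun k => ∃ l, h k l = [])) (by
    intro k hk; simp only [Finset.mem_filter, I, Finset.mem_Ico] at hk; exact ⟨hk.1.1.1, hk.1.1.2, hk.1.2, hk.2⟩)
  have k3 := hc ((I.filter (fun k => ¬ Com (h k))).filter (fun k => ¬ ∃ l, h k l = [])) (by
    intro k hk; simp only [Finset.mem_filter, I, Finset.mem_Ico] at hk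
    exact ⟨hk.1.1.1, hk.1.1.2, hk.1.2, fun l hl => hk.2 ⟨l, hl⟩⟩)
  omega

theorem final (H : Chn m E h) (hE : (E 0).1 ≠ (E 0).2) :
    ∃ x : Fin 3, m ≤ (((E 0).1 ++ (E 0).2).count x + ((E 0).1 ++ (E 0).2).count x) ^ 2 + 5 := by
  by_cases hp : (E 0).1.Perm (E 0).2
  · obtain ⟨x, -, hx⟩ := Finset.exists_max_image (Finset.univ : Finset (Fin 3)) (fun l => (E 0).1.count l) ⟨0, by simp⟩
    refine ⟨x, ?_⟩
    set μ := (E 0).1.count x with hμ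
    have hμ1 : 1 ≤ μ := by
      by_contra hcon
      have h0 : (E 0).1 = [] := by
        rw [List.eq_nil_iff_forall_not_mem]
        intro l hl
        have h1 := hx l (Finset.mem_univ _)
        have := List.count_pos_iff.2 hl
        omega
      apply hE
      rw [h0] at hp ⊢
      exact hp.nil_eq
    have hv : (E 0).2.count x = μ := (hp.count_eq x).symm
    have := split_card m 3 3 (2 * (6 * KK μ)) h (com_card H) (erase_card H)
      (main_card H hE hp μ hμ1 (fun p => hx p (Finset.mem_univ _)))
    rw [List.count_append, ← hμ, hv]
    unfold KK at this
    split_ifs at this with h1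
    · rw [h1]; omega
    · have : 2 ≤ μ := by omega
      nlinarith
  · have := split_card m 2 3 3 h (com_card_unb H hp) (erase_card H) (main_card_unb H hp)
    have hx : ∃ x, x ∈ (E 0).1 ++ (E 0).2 := by
      by_contra hcon
      push Not at hcon
      have := List.eq_nil_iff_forall_not_mem.2 hcon
      rw [List.append_eq_nil_iff] at this
      apply hE; rw [this.1, this.2]
    obtain ⟨x, hx⟩ := hx
    refine ⟨x, ?_⟩
    have := List.count_pos_iff.2 hx
    nlinarith
end chain
end WE

/-- If `E₁, …, E_m` is a chain of word equations on three unknowns, i.e. a sequence of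
nontrivial equations with `Sol(E₁) ⊋ Sol(E₁,E₂) ⊋ ⋯ ⊋ Sol(E₁,…,E_m)`, then there are two
unknowns `x, y` such that `m ≤ (|E₁|_x + |E₁|_y)² + 5`. -/
theorem chain_three_unknowns_bound {m : ℕ}
    (A : Finset ℕ) (hA : ∀ a ∈ A, 0 < a)
    (hm : 0 < m)
    (eqs : Fin m → List (Fin 3) × List (Fin 3))
    (hnt : ∀ i, (eqs i).1 ≠ (eqs i).2)
    (hchain : ∀ k : ℕ, 1 ≤ k → k < m →
      {h : Fin 3 → List ℕ | IntoAlph A h ∧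
          ∀ i : Fin m, (i : ℕ) < k + 1 → mApply h (eqs i).1 = mApply h (eqs i).2}
        ⊂ {h : Fin 3 → List ℕ | IntoAlph A h ∧
            ∀ i : Fin m, (i : ℕ) < k → mApply h (eqs i).1 = mApply h (eqs i).2}) :
    ∃ x y : Fin 3,
      m ≤ (((eqs ⟨0, hm⟩).1 ++ (eqs ⟨0, hm⟩).2).count x
            + ((eqs ⟨0, hm⟩).1 ++ (eqs ⟨0, hm⟩).2).count y) ^ 2 + 5 := by
  have hw : ∀ k : ℕ, ∃ h : Fin 3 → List ℕ, 1 ≤ k → k < m →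
      (∀ i : Fin m, (i : ℕ) < k → mApply h (eqs i).1 = mApply h (eqs i).2) ∧
      ¬ ∀ i : Fin m, (i : ℕ) < k + 1 → mApply h (eqs i).1 = mApply h (eqs i).2 := by
    intro k
    by_cases hk : 1 ≤ k ∧ k < m
    · obtain ⟨h, h1, h2⟩ := Set.exists_of_ssubset (hchain k hk.1 hk.2)
      exact ⟨h, fun _ _ => ⟨h1.2, fun h3 => h2 ⟨h1.1, h3⟩⟩⟩
    · exact ⟨fun _ => [], fun a b => absurd ⟨a, b⟩ hk⟩
  choose h hh using hw
  let E : ℕ → List (Fin 3) × List (Fin 3) := fun k => if hk : k < m then eqs ⟨k, hk⟩ else ([], [])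
  have H : WE.Chn m E h := by
    intro k hk1 hk2
    obtain ⟨h1, h2⟩ := hh k hk1 hk2
    refine ⟨?_, ?_⟩
    · intro j hj
      have hjm : j < m := by omega
      simp only [WE.sol, E, hjm, dif_pos]
      exact h1 ⟨j, hjm⟩ hj
    · intro hs
      simp only [WE.sol, E, hk2, dif_pos] at hs
      apply h2
      intro i hi
      rcases Nat.lt_or_ge i k with hl | hl
      · exact h1 i hl
      · have hik : i = ⟨k, hk2⟩ := Fin.ext (by simp; omega)
        rw [hik]; exact hs
  have hE0 : E 0 = eqs ⟨0, hm⟩ := by simp [E, hm]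
  obtain ⟨x, hx⟩ := WE.final H (by rw [hE0]; exact hnt _)
  rw [hE0] at hx
  exact ⟨x, x, hx⟩
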